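/- arXiv:2504.20739 — 2 statements merged into one kernel-verified Lean document; each statement's English description precedes it below -/
import Mathlib

section
/- Fix an integer d ≥ 5 and set β = d/2 − 2. There exists a constant c > 0 such that E[f₀(Qₙ)] / n^{1/(d−1)} tends to c as n → ∞, where Qₙ is the convex hull of n i.i.d. points with law μ_β and f₀(Qₙ) is its number of extreme points. -/
open MeasureTheory

/-- The `β`-distribution on the closed unit disk of `ℝ²`. -/
noncomputable def betaMeasure (β : ℝ) : Measure (EuclideanSpace ℝ (Fin 2)) :=
  volume.withDensity fun x =>
    ENNReal.ofReal (if ‖x‖ ≤ 1 then (β + 1) / Real.pi * (1 - ‖x‖ ^ 2) ^ β else 0)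

instance (β : ℝ) : SigmaFinite (betaMeasure β) :=
  SigmaFinite.withDensity_ofReal _

/-- The joint law of `n` i.i.d. points with law `μ_β`, realized on `(ℝ²)ⁿ`. -/
noncomputable def betaPi (β : ℝ) (n : ℕ) :
    Measure (Fin n → EuclideanSpace ℝ (Fin 2)) :=
  Measure.pi fun _ => betaMeasure β

/-- The number of vertices (extreme points) of the convex hull `Qₙ`, as a real. -/
noncomputable def vertCount {n : ℕ} (ω : Fin n → EuclideanSpace ℝ (Fin 2)) : ℝ :=
  Nat.card (Set.extremePoints ℝ (convexHull ℝ (Set.range ω)))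

/-- `E[f₀(Qₙ)]`. -/
noncomputable def meanF0 (β : ℝ) (n : ℕ) : ℝ :=
  ∫ ω, vertCount ω ∂ betaPi β n

/-!
For points in general position, every vertex of the convex hull is the initial point of exactly one
counterclockwise edge, so by independence `E[f₀(Qₙ)]` is `n (n - 1)` times the probability that
`n - 2` of the points lie to the left of the directed line through the other two. Rotating that line
into the horizontal direction turns this probability into a constant multiple of
`∫ φ(h) R(h) ^ (n - 2) dh`, where `R(h)` is the mass of the half plane above height `h` and `φ(h)`
is a first moment of pairs of points on the chord at height `h`. With `t = h + 1`, the beta density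
gives `φ ~ C t ^ (2β + 3/2)` and `1 - R ~ c t ^ (β + 3/2)` as `t → 0`, so by Watson's lemma the
integral is of order `n ^ (-(2β + 5/2) / (β + 3/2))`, which is `n ^ (1 / (2β + 3) - 2)`.
-/

namespace BetaPolytope

open Filter Set Topology Real
open scoped ENNReal InnerProductSpace

/-! ### Vertices and edges of planar convex hulls -/

section ExtremePoints

variable {E : Type*} [NormedAddCommGroup E] [NormedSpace ℝ E]

theorem mem_extremePoints_convexHull_iff {s : Set E} (hs : s.Finite) {a : E} (ha : a ∈ s) :
    a ∈ (convexHull ℝ s).extremePoints ℝ ↔ ∃ f : E →L[ℝ] ℝ, ∀ b ∈ s, b ≠ a → f a < f b := by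
  have ha' : a ∈ convexHull ℝ s := subset_convexHull ℝ s ha
  constructor
  · intro h
    rw [(convex_convexHull ℝ s).mem_extremePoints_iff_convex_sdiff] at h
    have hsub : convexHull ℝ (s \ {a}) ⊆ convexHull ℝ s \ {a} :=
      convexHull_min (sdiff_subset_sdiff_left (subset_convexHull ℝ s)) h.2
    obtain ⟨f, u, hau, hub⟩ := geometric_hahn_banach_point_closed (convex_convexHull ℝ (s \ {a}))
      (hs.sdiff.isClosed_convexHull ℝ) fun hmem => (hsub hmem).2 rfl
    exact ⟨f, fun b hb hba => hau.trans (hub b (subset_convexHull ℝ _ ⟨hb, hba⟩))⟩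
  · rintro ⟨f, hf⟩
    refine exposedPoints_subset_extremePoints ⟨ha', -f, ?_⟩
    have hconv : Convex ℝ {y | y = a ∨ f a < f y} := by
      refine convex_iff_forall_pos.2 ?_
      rintro y (rfl | hy) z (rfl | hz) p q hp hq hpq
      · exact .inl (by rw [← add_smul, hpq, one_smul])
      all_goals
        right
        simp only [map_add, map_smul, smul_eq_mul]
        obtain rfl : q = 1 - p := by linarith
        nlinarith
    have hmin : convexHull ℝ s ⊆ {y | y = a ∨ f a < f y} :=
      convexHull_min (fun b hb => or_iff_not_imp_left.2 (hf b hb)) hconv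
    intro y hy
    rcases hmin hy with rfl | hlt
    · exact ⟨le_rfl, fun _ => rfl⟩
    · exact ⟨neg_le_neg hlt.le, fun hle => absurd (neg_le_neg_iff.1 hle) hlt.not_ge⟩

end ExtremePoints

section Edges

variable {E : Type*} [NormedAddCommGroup E] [InnerProductSpace ℝ E]
  [Fact (Module.finrank ℝ E = 2)] (o : Orientation ℝ E (Fin 2)) {ι : Type*} {x : ι → E} {i j : ι}

/-- A family of points of an oriented plane is in general position if its members are distinct and
no three of them are collinear. -/
def InGeneralPosition (x : ι → E) : Prop :=
  Function.Injective x ∧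
    ∀ i j l, i ≠ j → l ≠ i → l ≠ j → o.areaForm (x j - x i) (x l - x i) ≠ 0

/-- The oriented segment from `x i` to `x j` is a counterclockwise edge of the convex hull of the
family `x`: all other points of the family lie strictly to its left. -/
def IsLeftEdge (x : ι → E) (i j : ι) : Prop :=
  i ≠ j ∧ ∀ l, l ≠ i → l ≠ j → 0 < o.areaForm (x j - x i) (x l - x i)

variable {o}

theorem IsLeftEdge.target_unique {j' : ι} (h : IsLeftEdge o x i j) (h' : IsLeftEdge o x i j') :
    j = j' := by
  by_contra hne
  have hpos := h.2 j' h'.1.symm (Ne.symm hne)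
  rw [o.areaForm_swap] at hpos
  linarith [h'.2 j h.1.symm hne]

/-- Tilting the normal functional of the edge slightly makes `x i` its unique minimiser. -/
theorem IsLeftEdge.exists_forall_lt [Finite ι] (h : IsLeftEdge o x i j) (hij : x i ≠ x j) :
    ∃ f : E →L[ℝ] ℝ, ∀ l, l ≠ i → f (x i) < f (x l) := by
  set w := x j - x i with hw
  have hw0 : 0 < ⟪w, w⟫_ℝ := real_inner_self_pos.2 (sub_ne_zero.2 hij.symm)
  have hev (l : ι) : ∀ᶠ ε : ℝ in 𝓝[>] 0,
      l ≠ i → 0 < o.areaForm w (x l - x i) + ε * ⟪w, x l - x i⟫_ℝ := by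
    by_cases hlj : l = j
    · subst hlj
      filter_upwards [self_mem_nhdsWithin] with ε hε _
      simpa [← hw] using mul_pos hε hw0
    by_cases hli : l = i
    · exact Eventually.of_forall fun _ hne => absurd hli hne
    have hlim : Tendsto (fun ε : ℝ => o.areaForm w (x l - x i) + ε * ⟪w, x l - x i⟫_ℝ)
        (𝓝[>] 0) (𝓝 (o.areaForm w (x l - x i))) := by
      refine Tendsto.mono_left ?_ nhdsWithin_le_nhds
      exact Continuous.tendsto' (by fun_prop) _ _ (by simp)
    exact (hlim.eventually_const_lt (h.2 l hli hlj)).mono fun _ hε _ => hε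
  obtain ⟨ε, hε⟩ := (eventually_all.2 hev).exists
  refine ⟨o.areaForm' w + ε • innerSL ℝ w, fun l hl => sub_pos.1 ?_⟩
  rw [← map_sub]
  simpa using hε l hl

/-- Among the directions from `x i` to the other points, all of which lie in an open half plane,
the clockwise-most one is an edge. -/
theorem InGeneralPosition.exists_isLeftEdge [Finite ι] [Nontrivial ι]
    (hx : InGeneralPosition o x) {f : E →L[ℝ] ℝ} (hf : ∀ l, l ≠ i → f (x i) < f (x l)) :
    ∃ j, IsLeftEdge o x i j := by
  have : FiniteDimensional ℝ E := .of_fact_finrank_eq_two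
  set a := (InnerProductSpace.toDual ℝ E).symm f
  have ha (l : ι) (hl : l ≠ i) : 0 < ⟪a, x l - x i⟫_ℝ := by
    rw [InnerProductSpace.toDual_symm_apply, map_sub]
    exact sub_pos.2 (hf l hl)
  obtain ⟨j, hji, hmin⟩ := Set.exists_min_image {l | l ≠ i}
    (fun l => o.areaForm a (x l - x i) / ⟪a, x l - x i⟫_ℝ) (toFinite _) (exists_ne i)
  have hij : i ≠ j := Ne.symm hji
  refine ⟨j, hij, fun l hli hlj => lt_of_le_of_ne ?_ (hx.2 i j l hij hli hlj).symm⟩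
  have ha0 : 0 < ‖a‖ ^ 2 := by
    have : a ≠ 0 := fun h0 => by simpa [h0] using ha j hji
    positivity
  have hslope := (div_le_div_iff₀ (ha j hji) (ha l hli)).1 (hmin l hli)
  refine nonneg_of_mul_nonneg_right ?_ ha0
  linarith [o.inner_mul_areaForm_sub a (x j - x i) (x l - x i)]

theorem InGeneralPosition.mem_extremePoints_iff [Finite ι] [Nontrivial ι]
    (hx : InGeneralPosition o x) :
    x i ∈ (convexHull ℝ (range x)).extremePoints ℝ ↔ ∃ j, IsLeftEdge o x i j := by
  rw [mem_extremePoints_convexHull_iff (finite_range x) (mem_range_self i)]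
  simp only [forall_mem_range, hx.1.ne_iff]
  exact ⟨fun ⟨_, hf⟩ => hx.exists_isLeftEdge hf,
    fun ⟨_, hj⟩ => hj.exists_forall_lt (hx.1.ne hj.1)⟩

theorem InGeneralPosition.card_extremePoints [Finite ι] [Nontrivial ι]
    (hx : InGeneralPosition o x) :
    Nat.card ((convexHull ℝ (range x)).extremePoints ℝ) =
      Nat.card {p : ι × ι | IsLeftEdge o x p.1 p.2} := by
  have hinj : InjOn (fun p : ι × ι => x p.1) {p | IsLeftEdge o x p.1 p.2} := by
    rintro ⟨i, j⟩ hij ⟨i', j'⟩ hij' h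
    obtain rfl : i = i' := hx.1 h
    exact Prod.ext rfl (hij.target_unique hij')
  rw [← Nat.card_image_of_injOn hinj]
  congr 2
  ext a
  constructor
  · intro ha
    obtain ⟨i, rfl⟩ := extremePoints_convexHull_subset ha
    obtain ⟨j, hj⟩ := hx.mem_extremePoints_iff.1 ha
    exact ⟨(i, j), hj, rfl⟩
  · rintro ⟨⟨i, j⟩, hij, rfl⟩
    exact hx.mem_extremePoints_iff.2 ⟨j, hij⟩

theorem natCard_isLeftEdge [Fintype ι] (x : ι → E) :
    (Nat.card {p : ι × ι | IsLeftEdge o x p.1 p.2} : ℝ) =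
      ∑ p ∈ Finset.univ.offDiag, {x : ι → E | IsLeftEdge o x p.1 p.2}.indicator (fun _ => 1) x := by
  classical
  have hset : {p : ι × ι | IsLeftEdge o x p.1 p.2} =
      Finset.univ.offDiag.filter fun p => IsLeftEdge o x p.1 p.2 := by
    ext p
    simpa using fun h : IsLeftEdge o x p.1 p.2 => h.1
  simp_rw [hset, Nat.card_coe_set_eq, ncard_coe_finset, indicator_apply, Finset.sum_boole]
  rfl

theorem isLeftEdge_insertNth_iff {m : ℕ} {i : Fin (m + 2)} {k : Fin (m + 1)} {a b : E}
    {x : Fin m → E} :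
    IsLeftEdge o (i.insertNth a (k.insertNth b x) : Fin (m + 2) → E) i (i.succAbove k) ↔
      ∀ l, 0 < o.areaForm (b - a) (x l - a) := by
  simp [IsLeftEdge, Fin.forall_iff_succAbove i, Fin.forall_iff_succAbove k,
    (Fin.succAbove_ne i k).symm]

end Edges

/-! ### Edges of random convex hulls -/

section InsertNth

variable {X : Type*} [MeasurableSpace X] (μ : Measure X) [SigmaFinite μ] {n : ℕ}

theorem lintegral_pi_insertNth (k : Fin (n + 1)) {A : Set (Fin (n + 1) → X)}
    (hA : MeasurableSet A) :
    ∫⁻ a, Measure.pi (fun _ => μ) {x : Fin n → X | k.insertNth a x ∈ A} ∂μ =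
      Measure.pi (fun _ => μ) A := by
  rw [← (measurePreserving_piFinSuccAbove (fun _ => μ) k).symm.measure_preimage_equiv A,
    Measure.prod_apply ((MeasurableEquiv.measurable _) hA)]
  rfl

variable {μ}

theorem ae_pi_of_ae_insertNth (k : Fin (n + 1)) {p : (Fin (n + 1) → X) → Prop}
    (hp : MeasurableSet {x | p x})
    (h : ∀ᵐ x ∂Measure.pi fun _ : Fin n => μ, ∀ᵐ a ∂μ, p (k.insertNth a x)) :
    ∀ᵐ x ∂Measure.pi fun _ => μ, p x := by
  have hmp := measurePreserving_piFinSuccAbove (fun _ => μ) k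
  have hp' : MeasurableSet {z | p ((MeasurableEquiv.piFinSuccAbove (fun _ => X) k).symm z)} :=
    (MeasurableEquiv.measurable _) hp
  rw [← hmp.symm.map_eq, ae_map_iff (MeasurableEquiv.measurable _).aemeasurable hp,
    Measure.ae_prod_iff_ae_ae hp', Measure.ae_ae_comm hp']
  exact h

theorem ae_pi_injective [MeasurableEq X] [NullSingletonClass μ] :
    ∀ᵐ x ∂Measure.pi fun _ : Fin n => μ, Function.Injective x := by
  have hne (i j : Fin n) (hij : i ≠ j) : ∀ᵐ x ∂Measure.pi fun _ => μ, x i ≠ x j := by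
    obtain _ | n := n
    · exact i.elim0
    obtain ⟨j, rfl⟩ := Fin.exists_succAbove_eq hij.symm
    refine ae_pi_of_ae_insertNth i
      (measurableSet_eq_fun (by fun_prop) (by fun_prop)).compl ?_
    exact .of_forall fun x => by simpa using Measure.ae_ne μ (x j)
  simp only [← ae_all_iff] at hne
  exact hne.mono fun x hx i j => not_imp_not.1 (hx i j)

end InsertNth

section RandomPoints

variable {E : Type*} [NormedAddCommGroup E] [InnerProductSpace ℝ E]
  [Fact (Module.finrank ℝ E = 2)] (o : Orientation ℝ E (Fin 2)) [MeasurableSpace E] [BorelSpace E]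
  {μ : Measure E}

attribute [local instance] FiniteDimensional.of_fact_finrank_eq_two

theorem measurable_areaForm {X : Type*} [MeasurableSpace X] {f g : X → E} (hf : Measurable f)
    (hg : Measurable g) : Measurable fun a => o.areaForm (f a) (g a) := by
  simp_rw [← o.inner_rightAngleRotation_left]
  exact (o.rightAngleRotation.continuous.measurable.comp hf).inner hg

theorem measurableSet_isLeftEdge {ι : Type*} [Countable ι] (i j : ι) :
    MeasurableSet {x : ι → E | IsLeftEdge o x i j} := by
  have (l : ι) : Measurable fun x : ι → E => o.areaForm (x j - x i) (x l - x i) :=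
    measurable_areaForm o (by fun_prop) (by fun_prop)
  exact measurableSet_setOfPred.2 <| measurable_const.and <| .forall fun l =>
    measurable_const.imp <| measurable_const.imp <|
      measurableSet_setOfPred.1 (measurableSet_lt measurable_const (this l))

theorem measure_areaForm_eq_zero (ν : Measure E) [ν.IsAddHaarMeasure] {v : E} (hv : v ≠ 0)
    (x : E) : ν {z | o.areaForm v (z - x) = 0} = 0 := by
  have hker : (o.areaForm v).ker ≠ ⊤ := fun htop => by
    have : o.rightAngleRotation v ∈ (o.areaForm v).ker := htop ▸ Submodule.mem_top
    rw [LinearMap.mem_ker, o.areaForm_rightAngleRotation_right] at this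
    exact hv (inner_self_eq_zero.1 this)
  have hnull := Measure.addHaar_submodule ν _ hker
  rw [← measure_preimage_add_right ν (-x)] at hnull
  simp_rw [sub_eq_add_neg]
  exact hnull

theorem ae_inGeneralPosition {n : ℕ} {ν : Measure E} [ν.IsAddHaarMeasure] [SigmaFinite μ]
    (hμ : μ ≪ ν) : ∀ᵐ x ∂Measure.pi fun _ : Fin n => μ, InGeneralPosition o x := by
  have : Nontrivial E := Module.nontrivial_of_finrank_pos (R := ℝ)
    (by rw [Fact.out (p := Module.finrank ℝ E = 2)]; norm_num)
  have : NullSingletonClass μ := ⟨fun x => hμ (measure_singleton x)⟩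
  have hne (i j l : Fin n) (hij : i ≠ j) (hli : l ≠ i) (hlj : l ≠ j) :
      ∀ᵐ x ∂Measure.pi fun _ => μ, o.areaForm (x j - x i) (x l - x i) ≠ 0 := by
    obtain _ | n := n
    · exact i.elim0
    obtain ⟨i, rfl⟩ := Fin.exists_succAbove_eq hli.symm
    obtain ⟨j, rfl⟩ := Fin.exists_succAbove_eq hlj.symm
    refine ae_pi_of_ae_insertNth l (measurableSet_eq_fun
      (measurable_areaForm o (by fun_prop) (by fun_prop)) measurable_const).compl ?_
    filter_upwards [ae_pi_injective] with x hx
    have hv : x j - x i ≠ 0 := sub_ne_zero.2 fun h => hij (congrArg _ (hx h).symm)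
    simpa [ae_iff] using hμ (measure_areaForm_eq_zero o ν hv (x i))
  simp only [← ae_all_iff] at hne
  filter_upwards [ae_pi_injective, hne] with x hinj hx using ⟨hinj, hx⟩

/-- The probability, for `m + 2` independent points of law `μ`, that the segment from one given
point to another is a counterclockwise edge of the convex hull. -/
noncomputable def leftEdgeProb (μ : Measure E) (m : ℕ) : ℝ≥0∞ :=
  ∫⁻ a, ∫⁻ b, μ {z | 0 < o.areaForm (b - a) (z - a)} ^ m ∂μ ∂μ

theorem pi_setOf_isLeftEdge [SigmaFinite μ] {m : ℕ} {i j : Fin (m + 2)} (hij : i ≠ j) :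
    Measure.pi (fun _ => μ) {x | IsLeftEdge o x i j} = leftEdgeProb o μ m := by
  obtain ⟨k, rfl⟩ := Fin.exists_succAbove_eq hij.symm
  have hedge := measurableSet_isLeftEdge o i (i.succAbove k)
  rw [leftEdgeProb, ← lintegral_pi_insertNth μ i hedge]
  refine lintegral_congr fun a => ?_
  have hmeas : MeasurableSet {y : Fin (m + 1) → E |
      i.insertNth a y ∈ {x : Fin (m + 2) → E | IsLeftEdge o x i (i.succAbove k)}} :=
    ((MeasurableEquiv.piFinSuccAbove (fun _ => E) i).symm.measurable.comp
      measurable_prodMk_left) hedge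
  rw [← lintegral_pi_insertNth μ k hmeas]
  refine lintegral_congr fun b => ?_
  have hset : {x : Fin m → E | k.insertNth b x ∈ {y : Fin (m + 1) → E |
      i.insertNth a y ∈ {x : Fin (m + 2) → E | IsLeftEdge o x i (i.succAbove k)}}} =
        univ.pi fun _ => {z | 0 < o.areaForm (b - a) (z - a)} := by
    ext x
    simp [isLeftEdge_insertNth_iff]
  rw [hset, Measure.pi_pi, Finset.prod_const, Finset.card_fin]

theorem integral_card_extremePoints {ν : Measure E} [ν.IsAddHaarMeasure] [IsFiniteMeasure μ]
    (hμ : μ ≪ ν) (m : ℕ) :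
    ∫ x : Fin (m + 2) → E, (Nat.card ((convexHull ℝ (range x)).extremePoints ℝ) : ℝ)
        ∂(Measure.pi fun _ => μ) =
      (m + 2) * (m + 1) * (leftEdgeProb o μ m).toReal := by
  have hcard : ∀ᵐ x ∂Measure.pi fun _ : Fin (m + 2) => μ,
      (Nat.card ((convexHull ℝ (range x)).extremePoints ℝ) : ℝ) =
        ∑ p ∈ Finset.univ.offDiag, {x | IsLeftEdge o x p.1 p.2}.indicator (fun _ => 1) x :=
    (ae_inGeneralPosition o hμ).mono fun x hx => by
      rw [hx.card_extremePoints, natCard_isLeftEdge]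
  have hint : ∀ p ∈ (Finset.univ : Finset (Fin (m + 2))).offDiag,
      ∫ x, {x | IsLeftEdge o x p.1 p.2}.indicator (fun _ => 1) x ∂(Measure.pi fun _ => μ) =
        (leftEdgeProb o μ m).toReal := fun p hp => by
    rw [integral_indicator_const _ (measurableSet_isLeftEdge o p.1 p.2), measureReal_def,
      pi_setOf_isLeftEdge o (Finset.mem_offDiag.1 hp).2.2, smul_eq_mul, mul_one]
  have hoff : ((Finset.univ : Finset (Fin (m + 2))).offDiag.card : ℝ) = (m + 2) * (m + 1) := by
    rw [Finset.offDiag_card, Finset.card_fin, ← Nat.mul_sub_one]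
    push_cast [Nat.add_sub_assoc]
    rfl
  rw [integral_congr_ae hcard, integral_finsetSum _ fun p _ =>
    (integrable_const (1 : ℝ)).indicator (measurableSet_isLeftEdge o p.1 p.2),
    Finset.sum_congr rfl hint, Finset.sum_const, nsmul_eq_mul, hoff]

end RandomPoints

/-! ### Rotation invariant measures on the plane -/

section LeftEdgeProbMap

variable {E F : Type*} [NormedAddCommGroup E] [InnerProductSpace ℝ E]
  [Fact (Module.finrank ℝ E = 2)] [MeasurableSpace E] [BorelSpace E]
  [NormedAddCommGroup F] [InnerProductSpace ℝ F]
  [Fact (Module.finrank ℝ F = 2)] [MeasurableSpace F] [BorelSpace F]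

theorem leftEdgeProb_map (o : Orientation ℝ E (Fin 2)) {μ : Measure E} {ν : Measure F}
    (φ : E ≃ₗᵢ[ℝ] F) (hφ : MeasurePreserving φ μ ν) (m : ℕ) :
    leftEdgeProb (Orientation.map (Fin 2) φ.toLinearEquiv o) ν m = leftEdgeProb o μ m := by
  have hemb := φ.toHomeomorph.measurableEmbedding
  simp only [leftEdgeProb, ← hφ.lintegral_comp_emb hemb, ← hφ.measure_preimage_emb hemb]
  simp [o.areaForm_map]

end LeftEdgeProbMap

section RadialMeasure

/-- The measure whose density at `x` with respect to the volume is `f ‖x‖`. -/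
noncomputable def radialMeasure (E : Type*) [Norm E] [MeasureSpace E] (f : ℝ → ℝ≥0∞) :
    Measure E :=
  volume.withDensity fun x => f ‖x‖

variable {E F : Type*} [NormedAddCommGroup E] [InnerProductSpace ℝ E] [FiniteDimensional ℝ E]
  [MeasurableSpace E] [BorelSpace E] [NormedAddCommGroup F] [InnerProductSpace ℝ F]
  [FiniteDimensional ℝ F] [MeasurableSpace F] [BorelSpace F]

theorem measurePreserving_radialMeasure (φ : E ≃ₗᵢ[ℝ] F) (f : ℝ → ℝ≥0∞) :
    MeasurePreserving φ (radialMeasure E f) (radialMeasure F f) := by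
  refine ⟨φ.continuous.measurable, Measure.ext fun s hs => ?_⟩
  rw [Measure.map_apply φ.continuous.measurable hs, radialMeasure, radialMeasure,
    withDensity_apply _ hs, withDensity_apply _ (φ.continuous.measurable hs),
    ← φ.measurePreserving.setLIntegral_comp_preimage_emb φ.toHomeomorph.measurableEmbedding]
  simp

instance (f : ℝ → ℝ≥0∞) : SFinite (radialMeasure E f) :=
  inferInstanceAs (SFinite (volume.withDensity _))

theorem lintegral_lintegral_radialMeasure_sub {f : ℝ → ℝ≥0∞} (hf : Measurable f)
    {K : E × E → ℝ≥0∞} (hK : Measurable K) :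
    ∫⁻ a, ∫⁻ b, K (a, b - a) ∂radialMeasure E f ∂radialMeasure E f =
      ∫⁻ v : E, ∫⁻ x : E, f ‖x‖ * f ‖x + v‖ * K (x, v) := by
  have hν {F : E → ℝ≥0∞} (hF : Measurable F) :
      ∫⁻ z, F z ∂radialMeasure E f = ∫⁻ z : E, f ‖z‖ * F z :=
    lintegral_withDensity_eq_lintegral_mul _ (by fun_prop) hF
  have hK' : Measurable fun p : E × E => K (p.1, p.2 - p.1) := by fun_prop
  calc ∫⁻ a, ∫⁻ b, K (a, b - a) ∂radialMeasure E f ∂radialMeasure E f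
      = ∫⁻ x : E, f ‖x‖ * ∫⁻ b, K (x, b - x) ∂radialMeasure E f := hν hK'.lintegral_prod_right'
    _ = ∫⁻ x : E, ∫⁻ v : E, f ‖x‖ * f ‖x + v‖ * K (x, v) := by
        refine lintegral_congr fun x => ?_
        rw [hν (by fun_prop), ← lintegral_const_mul _ (by fun_prop),
          ← lintegral_add_left_eq_self _ x]
        simp only [mul_assoc, add_sub_cancel_left]
    _ = ∫⁻ v : E, ∫⁻ x : E, f ‖x‖ * f ‖x + v‖ * K (x, v) :=
        lintegral_lintegral_swap (by fun_prop)

end RadialMeasure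

section Complex

attribute [local instance] Complex.finrank_real_complex_fact

theorem lintegral_complex {F : ℂ → ℝ≥0∞} (hF : Measurable F) :
    ∫⁻ z, F z = ∫⁻ h : ℝ, ∫⁻ a : ℝ, F ⟨a, h⟩ := by
  rw [← Complex.volume_preserving_equiv_real_prod.symm.lintegral_comp_emb
    Complex.measurableEquivRealProd.symm.measurableEmbedding, Measure.volume_eq_prod,
    lintegral_prod_symm' _ (by fun_prop)]
  rfl

theorem lintegral_complex_norm {g : ℝ → ℝ≥0∞} (hg : Measurable g) :
    ∫⁻ z : ℂ, g ‖z‖ = ENNReal.ofReal (2 * π) * ∫⁻ r in Ioi 0, ENNReal.ofReal r * g r := by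
  rw [← Complex.lintegral_comp_polarCoord_symm, polarCoord_target, Measure.volume_eq_prod,
    ← Measure.prod_restrict]
  have hcongr : ∀ᵐ p ∂(volume.restrict (Ioi (0 : ℝ))).prod (volume.restrict (Ioo (-π) π)),
      ENNReal.ofReal p.1 • g ‖Complex.polarCoord.symm p‖ = ENNReal.ofReal p.1 * g p.1 * 1 := by
    rw [Measure.prod_restrict]
    filter_upwards [ae_restrict_mem (measurableSet_Ioi.prod measurableSet_Ioo)] with p hp
    rw [Complex.norm_polarCoord_symm, abs_of_pos hp.1, smul_eq_mul, mul_one]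
  rw [lintegral_congr_ae hcongr,
    lintegral_prod_mul (f := fun r => ENNReal.ofReal r * g r) (g := fun _ => 1) (by fun_prop)
      (by fun_prop)]
  have hπ : volume (Ioo (-π) π) = ENNReal.ofReal (2 * π) := by
    rw [Real.volume_Ioo, sub_neg_eq_add, two_mul]
  rw [setLIntegral_one, hπ, mul_comm]

theorem rotation_arg_norm (v : ℂ) : rotation (Circle.exp v.arg) (‖v‖ : ℂ) = v := by
  rw [rotation_apply, Circle.coe_exp, mul_comm, Complex.norm_mul_exp_arg_mul_I]

/-- The mass, on the chord of the plane at height `h`, of the rotation invariant density with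
radial profile `f`. -/
noncomputable def chordMass (f : ℝ → ℝ≥0∞) (h : ℝ) : ℝ≥0∞ :=
  ∫⁻ a, f √(a ^ 2 + h ^ 2)

/-- The integral of the positive part of the signed distance `r` over all pairs of points `a`,
`a + r` on the chord at height `h`, each weighted by the rotation invariant density with radial
profile `f`. -/
noncomputable def chordMoment (f : ℝ → ℝ≥0∞) (h : ℝ) : ℝ≥0∞ :=
  ∫⁻ r, ENNReal.ofReal r * ∫⁻ a, f √(a ^ 2 + h ^ 2) * f √((a + r) ^ 2 + h ^ 2)

variable {f : ℝ → ℝ≥0∞}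

theorem radialMeasure_im_preimage (hf : Measurable f) {s : Set ℝ} (hs : MeasurableSet s) :
    radialMeasure ℂ f (Complex.im ⁻¹' s) = ∫⁻ h in s, chordMass f h := by
  have hs' : MeasurableSet (Complex.im ⁻¹' s) := Complex.measurable_im hs
  rw [radialMeasure, withDensity_apply _ hs', ← lintegral_indicator hs', ← lintegral_indicator hs,
    lintegral_complex (Measurable.indicator (by fun_prop) hs')]
  refine lintegral_congr fun h => ?_
  by_cases hh : h ∈ s <;> simp [hh, chordMass, Complex.norm_eq_sqrt_sq_add_sq, indicator]

theorem measurable_chordPair (hf : Measurable f) : Measurable fun p : ℝ × ℝ =>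
    ENNReal.ofReal p.1 * ∫⁻ a, f √(a ^ 2 + p.2 ^ 2) * f √((a + p.1) ^ 2 + p.2 ^ 2) :=
  Measurable.mul (by fun_prop) <| Measurable.lintegral_prod_right' (f := fun q : (ℝ × ℝ) × ℝ =>
    f √(q.2 ^ 2 + q.1.2 ^ 2) * f √((q.2 + q.1.1) ^ 2 + q.1.2 ^ 2)) (by fun_prop)

theorem antitone_radialMeasure_im_preimage_Ioi (f : ℝ → ℝ≥0∞) :
    Antitone fun h => radialMeasure ℂ f (Complex.im ⁻¹' Ioi h) :=
  fun _ _ h => measure_mono (preimage_mono (Ioi_subset_Ioi h))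

/-- The density of a pair of points at `x` and `x + v`, times the probability that `m` further
points lie to the left of the line through them. -/
noncomputable def edgeDensity (f : ℝ → ℝ≥0∞) (m : ℕ) (x v : ℂ) : ℝ≥0∞ :=
  f ‖x‖ * f ‖x + v‖ * radialMeasure ℂ f {z | 0 < Complex.orientation.areaForm v (z - x)} ^ m

theorem measurable_measure_areaForm_pos (f : ℝ → ℝ≥0∞) (m : ℕ) :
    Measurable fun p : ℂ × ℂ =>
      radialMeasure ℂ f {z | 0 < Complex.orientation.areaForm p.2 (z - p.1)} ^ m := by
  have hset : MeasurableSet {q : (ℂ × ℂ) × ℂ |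
      0 < Complex.orientation.areaForm q.1.2 (q.2 - q.1.1)} :=
    measurableSet_lt measurable_const (measurable_areaForm _ (by fun_prop) (by fun_prop))
  exact (measurable_measure_prodMk_left (ν := radialMeasure ℂ f) hset).pow_const m

theorem measurable_edgeDensity (hf : Measurable f) (m : ℕ) :
    Measurable fun p : ℂ × ℂ => edgeDensity f m p.1 p.2 :=
  Measurable.mul (by fun_prop) (measurable_measure_areaForm_pos f m)

theorem edgeDensity_rotation (m : ℕ) (c : Circle) (x v : ℂ) :
    edgeDensity f m (rotation c x) (rotation c v) = edgeDensity f m x v := by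
  have harea (z w : ℂ) : Complex.orientation.areaForm (rotation c z) (rotation c w) =
      Complex.orientation.areaForm z w :=
    Complex.orientation.areaForm_comp_linearIsometryEquiv _ (by simp) z w
  have hmp := measurePreserving_radialMeasure (rotation c) f
  rw [edgeDensity, ← map_add, ← hmp.measure_preimage_emb
    (rotation c).toHomeomorph.measurableEmbedding]
  simp only [LinearIsometryEquiv.norm_map, preimage_ofPred_eq, ← map_sub, harea, edgeDensity]

theorem edgeDensity_ofReal (m : ℕ) (a h : ℝ) {r : ℝ} (hr : 0 < r) :
    edgeDensity f m ⟨a, h⟩ r = f √(a ^ 2 + h ^ 2) * f √((a + r) ^ 2 + h ^ 2) *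
      radialMeasure ℂ f (Complex.im ⁻¹' Ioi h) ^ m := by
  have hset : {z : ℂ | 0 < Complex.orientation.areaForm r (z - ⟨a, h⟩)} = Complex.im ⁻¹' Ioi h := by
    ext z
    simp [Complex.areaForm, hr]
  rw [edgeDensity, hset]
  simp [Complex.norm_eq_sqrt_sq_add_sq]

theorem leftEdgeProb_eq_lintegral_edgeDensity (hf : Measurable f) (m : ℕ) :
    leftEdgeProb Complex.orientation (radialMeasure ℂ f) m = ∫⁻ v, ∫⁻ x, edgeDensity f m x v := by
  rw [leftEdgeProb]
  simpa only [add_sub_cancel_left, edgeDensity] using lintegral_lintegral_radialMeasure_sub hf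
    (measurable_measure_areaForm_pos f m)

theorem lintegral_edgeDensity_ofReal (hf : Measurable f) (m : ℕ) {r : ℝ} (hr : 0 < r) :
    ∫⁻ x, edgeDensity f m x r =
      ∫⁻ h, (∫⁻ a, f √(a ^ 2 + h ^ 2) * f √((a + r) ^ 2 + h ^ 2)) *
        radialMeasure ℂ f (Complex.im ⁻¹' Ioi h) ^ m := by
  have hmeas : Measurable fun x => edgeDensity f m x r :=
    (measurable_edgeDensity hf m).comp measurable_prodMk_right
  rw [lintegral_complex hmeas]
  refine lintegral_congr fun h => ?_
  simp_rw [edgeDensity_ofReal m _ h hr]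
  exact lintegral_mul_const _ (by fun_prop)

theorem leftEdgeProb_eq_lintegral_norm (hf : Measurable f) (m : ℕ) :
    leftEdgeProb Complex.orientation (radialMeasure ℂ f) m =
      ENNReal.ofReal (2 * π) *
        ∫⁻ r in Ioi 0, ENNReal.ofReal r * ∫⁻ x, edgeDensity f m x (r : ℝ) := by
  have hrot (v : ℂ) : ∫⁻ x, edgeDensity f m x v = ∫⁻ x, edgeDensity f m x (‖v‖ : ℝ) := by
    rw [← (rotation (Circle.exp v.arg)).measurePreserving.lintegral_comp_emb
      (rotation (Circle.exp v.arg)).toHomeomorph.measurableEmbedding]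
    exact lintegral_congr fun x => by
      rw [← edgeDensity_rotation m (Circle.exp v.arg) x (‖v‖ : ℝ), rotation_arg_norm]
  have hmeas : Measurable fun r : ℝ => ∫⁻ x, edgeDensity f m x r :=
    Measurable.lintegral_prod_left' (f := fun p : ℂ × ℝ => edgeDensity f m p.1 p.2)
      ((measurable_edgeDensity hf m).comp
        (by fun_prop : Measurable fun p : ℂ × ℝ => (p.1, (p.2 : ℂ))))
  rw [leftEdgeProb_eq_lintegral_edgeDensity hf, lintegral_congr hrot, lintegral_complex_norm hmeas]

theorem leftEdgeProb_radialMeasure (hf : Measurable f) (m : ℕ) :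
    leftEdgeProb Complex.orientation (radialMeasure ℂ f) m =
      ENNReal.ofReal (2 * π) *
        ∫⁻ h, chordMoment f h * radialMeasure ℂ f (Complex.im ⁻¹' Ioi h) ^ m := by
  have hpow : Measurable fun h => radialMeasure ℂ f (Complex.im ⁻¹' Ioi h) ^ m :=
    (antitone_radialMeasure_im_preimage_Ioi f).measurable.pow_const m
  have hpair := measurable_chordPair hf
  rw [leftEdgeProb_eq_lintegral_norm hf]
  congr 1
  calc ∫⁻ r : ℝ in Ioi 0, ENNReal.ofReal r * ∫⁻ x, edgeDensity f m x r
      = ∫⁻ r, ∫⁻ h, ENNReal.ofReal r * (∫⁻ a, f √(a ^ 2 + h ^ 2) * f √((a + r) ^ 2 + h ^ 2)) *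
          radialMeasure ℂ f (Complex.im ⁻¹' Ioi h) ^ m := by
        rw [← lintegral_indicator measurableSet_Ioi]
        refine lintegral_congr fun r => ?_
        by_cases hr : 0 < r
        · rw [indicator_of_mem (mem_Ioi.2 hr), lintegral_edgeDensity_ofReal hf m hr,
            ← lintegral_const_mul' _ _ ENNReal.ofReal_ne_top]
          simp_rw [mul_assoc]
        · simp [hr, ENNReal.ofReal_of_nonpos (not_lt.1 hr)]
    _ = ∫⁻ h, ∫⁻ r, ENNReal.ofReal r * (∫⁻ a, f √(a ^ 2 + h ^ 2) * f √((a + r) ^ 2 + h ^ 2)) *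
          radialMeasure ℂ f (Complex.im ⁻¹' Ioi h) ^ m :=
        lintegral_lintegral_swap (hpair.mul (hpow.comp measurable_snd)).aemeasurable
    _ = ∫⁻ h, chordMoment f h * radialMeasure ℂ f (Complex.im ⁻¹' Ioi h) ^ m :=
        lintegral_congr fun h => lintegral_mul_const _ (hpair.comp measurable_prodMk_right)

theorem radialMeasure_univ (hf : Measurable f) :
    radialMeasure ℂ f univ = ENNReal.ofReal (2 * π) * ∫⁻ r in Ioi 0, ENNReal.ofReal r * f r := by
  rw [radialMeasure, withDensity_apply _ .univ, setLIntegral_univ, lintegral_complex_norm hf]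

end Complex

/-! ### Asymptotics of Laplace integrals -/

section Laplace

theorem eventually_forall_mem_Ioo {p : ℝ → Prop} {x : ℝ} (h : ∀ᶠ t in 𝓝[>] x, p t) :
    ∀ᶠ δ in 𝓝[>] x, ∀ t ∈ Ioo x δ, p t := by
  obtain ⟨δ₀, hδ₀, h⟩ := (nhdsGT_basis x).eventually_iff.1 h
  filter_upwards [Ioo_mem_nhdsGT hδ₀] with δ hδ t ht
  exact h ⟨ht.1, ht.2.trans hδ.2⟩

theorem exists_abs_le_mul_rpow {α L : ℝ} {w : ℝ → ℝ}
    (hw : Tendsto (fun t => w t / t ^ α) (𝓝[>] 0) (𝓝 L)) :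
    ∃ K, ∀ᶠ t in 𝓝[>] 0, |w t| ≤ K * t ^ α := by
  refine ⟨|L| + 1, ?_⟩
  filter_upwards [hw.abs.eventually_le_const (lt_add_one |L|), self_mem_nhdsWithin] with t ht ht0
  have htα := rpow_pos_of_pos ht0 α
  rwa [abs_div, abs_of_pos htα, div_le_iff₀ htα] at ht

theorem rpow_neg_mul_setIntegral_Ioo {w φ : ℝ → ℝ} {α δ ε : ℝ} (hε : 0 < ε) :
    ε ^ (-(α + 1)) * ∫ t in Ioo 0 δ, w t * φ t =
      ∫ s in Ioi 0, (Iio (δ / ε)).indicator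
        (fun s => w (ε * s) / (ε * s) ^ α * (s ^ α * φ (ε * s))) s := by
  have hind : ∫ t in Ioo 0 δ, w t * φ t =
      ∫ t in Ioi 0, (Iio δ).indicator (fun t => w t * φ t) t := by
    rw [setIntegral_indicator measurableSet_Iio, Ioi_inter_Iio]
  have hsub := integral_comp_mul_left_Ioi ((Iio δ).indicator fun t => w t * φ t) 0 hε
  rw [mul_zero, smul_eq_mul] at hsub
  rw [hind, ← mul_inv_cancel_left₀ hε.ne' (∫ t in Ioi 0, _), ← hsub, ← mul_assoc,
    ← integral_const_mul]
  refine setIntegral_congr_fun measurableSet_Ioi fun s (hs : 0 < s) => ?_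
  have hmem : ε * s ∈ Iio δ ↔ s ∈ Iio (δ / ε) := by simp [lt_div_iff₀' hε]
  have hpow : ε ^ (-(α + 1)) * ε = (ε ^ α)⁻¹ := by
    rw [← rpow_add_one hε.ne', ← rpow_neg hε.le]
    ring_nf
  by_cases h : s ∈ Iio (δ / ε)
  · simp only [indicator_of_mem h, indicator_of_mem (hmem.2 h), hpow, mul_rpow hε.le hs.le]
    field [(rpow_pos_of_pos hs α).ne', (rpow_pos_of_pos hε α).ne']
  · simp only [indicator_of_notMem h, indicator_of_notMem (mt hmem.1 h), mul_zero]

/-- Rescaling the variable by `ε i` turns the claim into an instance of dominated convergence. -/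
theorem tendsto_rpow_neg_mul_setIntegral_Ioo {ι : Type*} {l : Filter ι} [l.IsCountablyGenerated]
    {α L δ K : ℝ} {w Φ G : ℝ → ℝ} {ε : ι → ℝ} {φ : ι → ℝ → ℝ} (hδ : 0 < δ)
    (hwm : Measurable w) (hφm : ∀ i, Measurable (φ i))
    (hw : Tendsto (fun t => w t / t ^ α) (𝓝[>] 0) (𝓝 L))
    (hK : ∀ t ∈ Ioo 0 δ, |w t| ≤ K * t ^ α) (hε : Tendsto ε l (𝓝[>] 0))
    (hφ : ∀ s > 0, Tendsto (fun i => φ i (ε i * s)) l (𝓝 (Φ s)))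
    (hφG : ∀ᶠ i in l, ∀ s > 0, ε i * s < δ → |φ i (ε i * s)| ≤ G s)
    (hG : IntegrableOn (fun s => s ^ α * G s) (Ioi 0)) :
    Tendsto (fun i => ε i ^ (-(α + 1)) * ∫ t in Ioo 0 δ, w t * φ i t) l
      (𝓝 (L * ∫ s in Ioi 0, s ^ α * Φ s)) := by
  obtain ⟨hε0, hεpos⟩ := tendsto_nhdsWithin_iff.1 hε
  rw [← integral_const_mul]
  refine (tendsto_integral_filter_of_dominated_convergence (fun s => |K| * |s ^ α * G s|)
    (.of_forall fun i => ?_) ?_ (hG.abs.const_mul |K|) ?_).congr'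
    (hεpos.mono fun i hi => (rpow_neg_mul_setIntegral_Ioo hi).symm)
  · have := hφm i
    exact (Measurable.indicator (by fun_prop) measurableSet_Iio).aestronglyMeasurable
  · filter_upwards [hφG, hεpos] with i hi (hεi : 0 < ε i)
    filter_upwards [ae_restrict_mem measurableSet_Ioi] with s (hs : 0 < s)
    by_cases h : s ∈ Iio (δ / ε i)
    · have hεs : ε i * s < δ := (lt_div_iff₀' hεi).1 h
      have hεsα := rpow_pos_of_pos (mul_pos hεi hs) α
      have hwK : |w (ε i * s) / (ε i * s) ^ α| ≤ |K| := by
        rw [abs_div, abs_of_pos hεsα, div_le_iff₀ hεsα]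
        exact (hK _ ⟨mul_pos hεi hs, hεs⟩).trans
          (mul_le_mul_of_nonneg_right (le_abs_self K) hεsα.le)
      rw [indicator_of_mem h, norm_eq_abs, abs_mul, abs_mul, abs_mul]
      exact mul_le_mul hwK (mul_le_mul_of_nonneg_left ((hi s hs hεs).trans (le_abs_self _))
        (abs_nonneg _)) (by positivity) (abs_nonneg K)
    · rw [indicator_of_notMem h, norm_zero]
      positivity
  · filter_upwards [ae_restrict_mem measurableSet_Ioi] with s (hs : 0 < s)
    have hεs : Tendsto (fun i => ε i * s) l (𝓝[>] 0) := by
      refine tendsto_nhdsWithin_iff.2 ⟨by simpa using hε0.mul_const s, ?_⟩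
      exact hεpos.mono fun i hi => mul_pos hi hs
    refine ((hw.comp hεs).mul ((hφ s hs).const_mul (s ^ α))).congr' ?_
    filter_upwards [hεpos, hεs.eventually (Ioo_mem_nhdsGT hδ)] with i hεi hi
    rw [indicator_of_mem (mem_Iio.2 ((lt_div_iff₀' hεi).2 hi.2))]
    rfl

theorem integrableOn_rpow_mul_indicator {b : ℝ} (hb : -1 < b) :
    IntegrableOn (fun s : ℝ => s ^ b * (Iic 1).indicator 1 s) (Ioi 0) ∧
      ∫ s in Ioi (0 : ℝ), s ^ b * (Iic 1).indicator 1 s = 1 / (b + 1) := by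
  have hcongr : EqOn (fun s : ℝ => s ^ b * (Iic 1).indicator 1 s)
      ((Iic 1).indicator fun s => s ^ b) (Ioi 0) := fun s _ => by
    by_cases hs : s ≤ 1 <;> simp [hs]
  constructor
  · rw [integrableOn_congr_fun hcongr measurableSet_Ioi, integrableOn_indicator_iff
      measurableSet_Iic, Iic_inter_Ioi]
    exact (intervalIntegrable_iff_integrableOn_Ioc_of_le zero_le_one).1
      (intervalIntegral.intervalIntegrable_rpow' hb)
  · rw [setIntegral_congr_fun measurableSet_Ioi hcongr, setIntegral_indicator measurableSet_Iic,
      Ioi_inter_Iic, ← intervalIntegral.integral_of_le zero_le_one, integral_rpow (.inl hb),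
      one_rpow, zero_rpow (by linarith), sub_zero]

theorem tendsto_setIntegral_Ioc_div_rpow {g : ℝ → ℝ} {b L : ℝ} (hb : -1 < b)
    (hgm : Measurable g) (hg : Tendsto (fun t => g t / t ^ b) (𝓝[>] 0) (𝓝 L)) :
    Tendsto (fun t => (∫ u in Ioc 0 t, g u) / t ^ (b + 1)) (𝓝[>] 0) (𝓝 (L / (b + 1))) := by
  obtain ⟨K, hK⟩ := exists_abs_le_mul_rpow hg
  obtain ⟨δ, hδK, hδ : 0 < δ⟩ :=
    ((eventually_forall_mem_Ioo hK).and self_mem_nhdsWithin).exists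
  have hscale (t : ℝ) (ht : 0 < t) (s : ℝ) :
      (Iic t).indicator (1 : ℝ → ℝ) (t * s) = (Iic 1).indicator 1 s := by
    simp [indicator, mul_le_iff_le_one_right ht]
  have h01 (s : ℝ) : 0 ≤ (Iic (1 : ℝ)).indicator (1 : ℝ → ℝ) s :=
    indicator_nonneg (fun _ _ => zero_le_one) s
  have key := tendsto_rpow_neg_mul_setIntegral_Ioo (l := 𝓝[>] 0) (ε := id)
    (φ := fun t => (Iic t).indicator 1) (Φ := (Iic 1).indicator 1) (G := (Iic 1).indicator 1)
    hδ hgm (fun t => measurable_one.indicator measurableSet_Iic) hg hδK tendsto_id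
    (fun s _ => tendsto_const_nhds.congr' <|
      eventually_mem_nhdsWithin.mono fun t ht => (hscale t ht s).symm)
    (eventually_mem_nhdsWithin.mono fun t ht s _ _ => by
      simp only [id, hscale t ht, abs_of_nonneg (h01 s), le_refl])
    (integrableOn_rpow_mul_indicator hb).1
  rw [(integrableOn_rpow_mul_indicator hb).2, mul_one_div] at key
  refine key.congr' ?_
  filter_upwards [Ioo_mem_nhdsGT hδ] with t ht
  have hprod (u : ℝ) : g u * (Iic t).indicator (1 : ℝ → ℝ) u = (Iic t).indicator g u := by
    by_cases hu : u ≤ t <;> simp [hu]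
  have hset : Ioo 0 δ ∩ Iic t = Ioc 0 t :=
    Set.ext fun u => ⟨fun h => ⟨h.1.1, h.2⟩, fun h => ⟨⟨h.1, h.2.trans_lt ht.2⟩, h.2⟩⟩
  simp only [id, hprod, setIntegral_indicator measurableSet_Iic, hset]
  rw [rpow_neg ht.1.le, inv_mul_eq_div]

theorem tendsto_natCast_rpow_neg_inv {γ : ℝ} (hγ : 0 < γ) :
    Tendsto (fun m : ℕ => (m : ℝ) ^ (-γ⁻¹)) atTop (𝓝[>] 0) := by
  refine tendsto_nhdsWithin_iff.2 ⟨?_, ?_⟩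
  · exact (tendsto_rpow_neg_atTop (inv_pos.2 hγ)).comp tendsto_natCast_atTop_atTop
  · filter_upwards [eventually_gt_atTop 0] with m hm
    exact rpow_pos_of_pos (Nat.cast_pos.2 hm) _

theorem natCast_mul_rpow_neg_inv_mul_rpow {γ s : ℝ} {m : ℕ} (hγ : γ ≠ 0) (hm : m ≠ 0)
    (hs : 0 ≤ s) : (m : ℝ) * ((m : ℝ) ^ (-γ⁻¹) * s) ^ γ = s ^ γ := by
  have hm' : (0 : ℝ) < m := Nat.cast_pos.2 (Nat.pos_of_ne_zero hm)
  rw [mul_rpow (by positivity) hs, ← rpow_mul hm'.le, neg_mul, inv_mul_cancel₀ hγ, rpow_neg_one,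
    mul_inv_cancel_left₀ hm'.ne']

theorem tendsto_comp_rpow_neg_inv_pow {R : ℝ → ℝ} {c γ : ℝ} (hγ : 0 < γ)
    (hR : Tendsto (fun t => (1 - R t) / t ^ γ) (𝓝[>] 0) (𝓝 c)) {s : ℝ} (hs : 0 < s) :
    Tendsto (fun m : ℕ => R ((m : ℝ) ^ (-γ⁻¹) * s) ^ m) atTop (𝓝 (exp (-c * s ^ γ))) := by
  have hε : Tendsto (fun m : ℕ => (m : ℝ) ^ (-γ⁻¹) * s) atTop (𝓝[>] 0) := by
    obtain ⟨h0, hpos⟩ := tendsto_nhdsWithin_iff.1 (tendsto_natCast_rpow_neg_inv hγ)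
    exact tendsto_nhdsWithin_iff.2
      ⟨by simpa using h0.mul_const s, hpos.mono fun m hm => mul_pos hm hs⟩
  have hlim : Tendsto (fun m : ℕ => (m : ℝ) * (R ((m : ℝ) ^ (-γ⁻¹) * s) - 1)) atTop
      (𝓝 (-c * s ^ γ)) := by
    refine ((hR.comp hε).neg.mul_const (s ^ γ)).congr' ?_
    filter_upwards [eventually_ne_atTop 0, hε.eventually self_mem_nhdsWithin] with m hm hεm
    have hpow := (rpow_pos_of_pos hεm γ).ne'
    rw [← natCast_mul_rpow_neg_inv_mul_rpow hγ.ne' hm hs.le]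
    simp only [Function.comp]
    field
  simpa using tendsto_one_add_pow_exp_of_tendsto hlim

theorem tendsto_natCast_rpow_mul_pow {r : ℝ} (hr0 : 0 ≤ r) (hr1 : r < 1) (p : ℝ) :
    Tendsto (fun m : ℕ => (m : ℝ) ^ p * r ^ m) atTop (𝓝 0) := by
  refine squeeze_zero (fun m => by positivity) (fun m => ?_)
    ((tendsto_rpow_mul_exp_neg_mul_atTop_nhds_zero p (1 - r) (sub_pos.2 hr1)).comp
      tendsto_natCast_atTop_atTop)
  have hexp : r ^ m ≤ exp (-(1 - r) * m) :=
    calc r ^ m ≤ exp (r - 1) ^ m := pow_le_pow_left₀ hr0 (by simpa using add_one_le_exp (r - 1)) m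
      _ = exp (-(1 - r) * m) := by rw [← exp_nat_mul]; ring_nf
  exact mul_le_mul_of_nonneg_left hexp (by positivity)

section Watson

variable {w R : ℝ → ℝ} {α γ c L δ : ℝ}

theorem integrableOn_mul_pow_of_antitone (hw : IntegrableOn w (Ioi δ)) (hR0 : ∀ t, 0 ≤ R t)
    (hR : Antitone R) (m : ℕ) : IntegrableOn (fun t => w t * R t ^ m) (Ioi δ) := by
  refine hw.mul_bdd (c := R δ ^ m)
    (hR.measurable.pow_const m).aestronglyMeasurable ?_
  filter_upwards [ae_restrict_mem measurableSet_Ioi] with t ht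
  rw [norm_pow, norm_of_nonneg (hR0 t)]
  exact pow_le_pow_left₀ (hR0 t) (hR (mem_Ioi.1 ht).le) m

theorem tendsto_rpow_mul_setIntegral_Ici_mul_pow (hδ : 0 < δ) (hw : IntegrableOn w (Ioi 0))
    (hR0 : ∀ t, 0 ≤ R t) (hR : Antitone R) (hRδ : R δ < 1) (p : ℝ) :
    Tendsto (fun m : ℕ => (m : ℝ) ^ p * ∫ t in Ici δ, w t * R t ^ m) atTop (𝓝 0) := by
  refine squeeze_zero_norm (fun m => ?_) (a := fun m : ℕ => (m : ℝ) ^ p * R δ ^ m *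
    ∫ t in Ici δ, |w t|) (by simpa using (tendsto_natCast_rpow_mul_pow (hR0 δ) hRδ p).mul_const _)
  rw [norm_mul, norm_of_nonneg (by positivity), mul_assoc, ← integral_const_mul]
  gcongr
  refine norm_integral_le_of_norm_le
    ((hw.mono_set (Ici_subset_Ioi.2 hδ)).abs.const_mul _) ?_
  filter_upwards [ae_restrict_mem measurableSet_Ici] with t ht
  rw [norm_mul, norm_pow, norm_of_nonneg (hR0 t), norm_eq_abs, mul_comm]
  gcongr
  exacts [hR0 t, hR ht]

theorem tendsto_rpow_mul_setIntegral_Ioo_mul_pow {K : ℝ} (hα : -1 < α) (hγ : 0 < γ) (hc : 0 < c)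
    (hδ : 0 < δ) (hwm : Measurable w) (hRm : Measurable R)
    (hw : Tendsto (fun t => w t / t ^ α) (𝓝[>] 0) (𝓝 L)) (hR0 : ∀ t, 0 ≤ R t)
    (hR : Tendsto (fun t => (1 - R t) / t ^ γ) (𝓝[>] 0) (𝓝 c))
    (hwδ : ∀ t ∈ Ioo 0 δ, |w t| ≤ K * t ^ α) (hRδ : ∀ t ∈ Ioo 0 δ, R t ≤ 1 - c / 2 * t ^ γ) :
    Tendsto (fun m : ℕ => (m : ℝ) ^ ((α + 1) / γ) * ∫ t in Ioo 0 δ, w t * R t ^ m) atTop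
      (𝓝 (L * ∫ s in Ioi 0, s ^ α * exp (-c * s ^ γ))) := by
  refine (tendsto_rpow_neg_mul_setIntegral_Ioo (φ := fun (m : ℕ) t => R t ^ m)
    (G := fun s => exp (-(c / 2) * s ^ γ)) hδ hwm (fun m => hRm.pow_const m) hw hwδ
    (tendsto_natCast_rpow_neg_inv hγ) (fun s hs => tendsto_comp_rpow_neg_inv_pow hγ hR hs) ?_
    (integrableOn_rpow_mul_exp_neg_mul_rpow hα hγ (half_pos hc))).congr fun m => ?_
  · filter_upwards [eventually_gt_atTop 0] with m hm s hs hεs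
    set ε := (m : ℝ) ^ (-γ⁻¹)
    have hε : 0 < ε := rpow_pos_of_pos (Nat.cast_pos.2 hm) _
    rw [abs_of_nonneg (pow_nonneg (hR0 _) m)]
    calc R (ε * s) ^ m ≤ exp (-(c / 2) * (ε * s) ^ γ) ^ m :=
          pow_le_pow_left₀ (hR0 _) ((hRδ _ ⟨mul_pos hε hs, hεs⟩).trans
            (by linarith [add_one_le_exp (-(c / 2) * (ε * s) ^ γ)])) m
      _ = exp (-(c / 2) * (m * (ε * s) ^ γ)) := by rw [← exp_nat_mul]; ring_nf
      _ = exp (-(c / 2) * s ^ γ) := by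
          rw [natCast_mul_rpow_neg_inv_mul_rpow hγ.ne' hm.ne' hs.le]
  · rw [← rpow_mul m.cast_nonneg, neg_mul_neg, inv_mul_eq_div]

/-- Watson's lemma: only an arbitrarily small neighbourhood of `0` contributes, and there
`R t ^ m` is close to `exp (-m * c * t ^ γ)`. -/
theorem tendsto_rpow_mul_setIntegral_mul_pow (hα : -1 < α) (hγ : 0 < γ) (hc : 0 < c)
    (hwm : Measurable w) (hwi : IntegrableOn w (Ioi 0))
    (hw : Tendsto (fun t => w t / t ^ α) (𝓝[>] 0) (𝓝 L)) (hR0 : ∀ t, 0 ≤ R t)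
    (hRanti : Antitone R) (hR : Tendsto (fun t => (1 - R t) / t ^ γ) (𝓝[>] 0) (𝓝 c)) :
    Tendsto (fun m : ℕ => (m : ℝ) ^ ((α + 1) / γ) * ∫ t in Ioi 0, w t * R t ^ m) atTop
      (𝓝 (L * ∫ s in Ioi 0, s ^ α * exp (-c * s ^ γ))) := by
  obtain ⟨K, hK⟩ := exists_abs_le_mul_rpow hw
  have hRle : ∀ᶠ t in 𝓝[>] 0, R t ≤ 1 - c / 2 * t ^ γ := by
    filter_upwards [hR.eventually_const_le (half_lt_self hc), self_mem_nhdsWithin] with t ht ht0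
    rw [le_div_iff₀ (rpow_pos_of_pos ht0 γ)] at ht
    linarith
  obtain ⟨δ, hwδ, hRδ, hδle, hδ : 0 < δ⟩ := ((eventually_forall_mem_Ioo hK).and <|
    (eventually_forall_mem_Ioo hRle).and <| hRle.and self_mem_nhdsWithin).exists
  have hδ1 : R δ < 1 := by
    have := rpow_pos_of_pos hδ γ
    exact hδle.trans_lt (sub_lt_self 1 (by positivity))
  have hsum := (tendsto_rpow_mul_setIntegral_Ioo_mul_pow hα hγ hc hδ hwm hRanti.measurable hw hR0
    hR hwδ hRδ).add (tendsto_rpow_mul_setIntegral_Ici_mul_pow hδ hwi hR0 hRanti hδ1 ((α + 1) / γ))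
  rw [add_zero] at hsum
  refine hsum.congr fun m => ?_
  have hint := integrableOn_mul_pow_of_antitone hwi hR0 hRanti m
  rw [← mul_add, ← setIntegral_union
    (disjoint_left.2 fun t h h' => (mem_Ici.1 h').not_gt h.2) measurableSet_Ici
    (hint.mono_set Ioo_subset_Ioi_self) (hint.mono_set (Ici_subset_Ioi.2 hδ)),
    Ioo_union_Ici_eq_Ioi hδ]

end Watson

theorem setIntegral_rpow_mul_exp_neg_pos {α γ c : ℝ} (hα : -1 < α) (hγ : 0 < γ) (hc : 0 < c) :
    0 < ∫ s in Ioi 0, s ^ α * exp (-c * s ^ γ) := by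
  rw [integral_rpow_mul_exp_neg_mul_rpow hγ hα hc]
  have := Gamma_pos_of_pos (div_pos (by linarith : 0 < α + 1) hγ)
  positivity

theorem tendsto_natCast_add_two_mul_add_one_div (e : ℝ) :
    Tendsto (fun m : ℕ => ((m : ℝ) + 2) * (m + 1) / ((m : ℝ) ^ (2 - e) * (m + 2) ^ e)) atTop
      (𝓝 1) := by
  have hone (c : ℝ) : Tendsto (fun m : ℕ => 1 + c / (m : ℝ)) atTop (𝓝 1) := by
    simpa using (tendsto_const_div_atTop_nhds_zero_nat c).const_add 1
  have hmul := ((hone 2).rpow_const (p := 1 - e) (.inl one_ne_zero)).mul (hone 1)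
  rw [one_rpow, one_mul] at hmul
  refine hmul.congr' ?_
  filter_upwards [eventually_gt_atTop 0] with m hm
  have hm' : (0 : ℝ) < m := Nat.cast_pos.2 hm
  have hm2 : (0 : ℝ) < m + 2 := by positivity
  have h2 : 1 + 2 / (m : ℝ) = (m + 2) / m := by field
  rw [h2, div_rpow hm2.le hm'.le, rpow_sub hm2, rpow_sub hm', rpow_sub hm', rpow_one, rpow_one,
    rpow_two]
  field [(rpow_pos_of_pos hm' e).ne', (rpow_pos_of_pos hm2 e).ne']

end Laplace

/-! ### Profiles with algebraic endpoint behaviour -/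

section CapProfile

/-- A function `φ` on the line is a cap profile of exponent `e` if it vanishes outside `(-1, 1)` and
is proportional to `(1 - h ^ 2) ^ e` there; the constant of proportionality is then `φ 0`. -/
def IsCapProfile (e : ℝ) (φ : ℝ → ℝ≥0∞) : Prop :=
  ∀ h, φ h = φ 0 * (Ioo (-1) 1).indicator (fun h => ENNReal.ofReal ((1 - h ^ 2) ^ e)) h

namespace IsCapProfile

variable {e : ℝ} {φ : ℝ → ℝ≥0∞}

theorem measurable (hφ : IsCapProfile e φ) : Measurable φ := by
  rw [funext hφ]
  exact (Measurable.indicator (by fun_prop) measurableSet_Ioo).const_mul _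

theorem apply_zero_ne_zero_and_ne_top (hφ : IsCapProfile e φ) (h0 : ∫⁻ h, φ h ≠ 0)
    (htop : ∫⁻ h, φ h ≠ ∞) : φ 0 ≠ 0 ∧ φ 0 ≠ ∞ := by
  rw [lintegral_congr hφ,
    lintegral_const_mul _ (Measurable.indicator (by fun_prop) measurableSet_Ioo)] at h0 htop
  refine ⟨left_ne_zero_of_mul h0, fun h => htop ?_⟩
  rw [h, ENNReal.top_mul (right_ne_zero_of_mul h0)]

theorem toReal_apply_zero_pos (hφ : IsCapProfile e φ) (h0 : ∫⁻ h, φ h ≠ 0)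
    (htop : ∫⁻ h, φ h ≠ ∞) : 0 < (φ 0).toReal :=
  let ⟨h1, h2⟩ := hφ.apply_zero_ne_zero_and_ne_top h0 htop
  ENNReal.toReal_pos h1 h2

theorem apply_ne_top (hφ : IsCapProfile e φ) (hφ0 : φ 0 ≠ ∞) (h : ℝ) : φ h ≠ ∞ := by
  rw [hφ]
  by_cases hh : h ∈ Ioo (-1 : ℝ) 1 <;> simp [hh, ENNReal.mul_ne_top, hφ0]

theorem apply_sub_one_of_nonpos (hφ : IsCapProfile e φ) {t : ℝ} (ht : t ≤ 0) : φ (t - 1) = 0 := by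
  have : t - 1 ∉ Ioo (-1 : ℝ) 1 := fun h => by linarith [h.1]
  rw [hφ, indicator_of_notMem this, mul_zero]

theorem toReal_apply_sub_one (hφ : IsCapProfile e φ) {t : ℝ} (ht : t ∈ Ioo (0 : ℝ) 2) :
    (φ (t - 1)).toReal = (φ 0).toReal * (t ^ e * (2 - t) ^ e) := by
  have hmem : t - 1 ∈ Ioo (-1 : ℝ) 1 := ⟨by linarith [ht.1], by linarith [ht.2]⟩
  have hsq : 1 - (t - 1) ^ 2 = t * (2 - t) := by ring
  have h2 : 0 ≤ 2 - t := sub_nonneg.2 ht.2.le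
  rw [hφ, indicator_of_mem hmem, ENNReal.toReal_mul, hsq, mul_rpow ht.1.le h2,
    ENNReal.toReal_ofReal (mul_nonneg (rpow_nonneg ht.1.le e) (rpow_nonneg h2 e))]

theorem tendsto_toReal_div_rpow (hφ : IsCapProfile e φ) :
    Tendsto (fun t => (φ (t - 1)).toReal / t ^ e) (𝓝[>] 0) (𝓝 ((φ 0).toReal * 2 ^ e)) := by
  have hlim : Tendsto (fun t : ℝ => (φ 0).toReal * (2 - t) ^ e) (𝓝[>] 0)
      (𝓝 ((φ 0).toReal * 2 ^ e)) := by
    have : Tendsto (fun t : ℝ => 2 - t) (𝓝 0) (𝓝 2) := by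
      simpa using (tendsto_id (x := 𝓝 (0 : ℝ))).const_sub 2
    exact ((this.rpow_const (.inl two_ne_zero)).const_mul _).mono_left nhdsWithin_le_nhds
  refine hlim.congr' ?_
  filter_upwards [Ioo_mem_nhdsGT two_pos] with t ht
  have := (rpow_pos_of_pos ht.1 e).ne'
  rw [hφ.toReal_apply_sub_one ht]
  field

theorem integrable_toReal_sub_one (hφ : IsCapProfile e φ) (htop : ∫⁻ h, φ h ≠ ∞) :
    Integrable fun t => (φ (t - 1)).toReal :=
  (integrable_toReal_of_lintegral_ne_top hφ.measurable.aemeasurable htop).comp_sub_right 1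

theorem toReal_lintegral_mul (hφ : IsCapProfile e φ) (hφ0 : φ 0 ≠ ∞) {g : ℝ → ℝ≥0∞}
    (hg : Measurable g) (hgtop : ∀ h, g h ≠ ∞) :
    (∫⁻ h, φ h * g h).toReal = ∫ t in Ioi 0, (φ (t - 1)).toReal * (g (t - 1)).toReal := by
  have hmeas : Measurable fun t => φ (t - 1) * g (t - 1) :=
    (hφ.measurable.mul hg).comp (measurable_sub_const 1)
  rw [← lintegral_sub_right_eq_self _ (1 : ℝ),
    ← integral_toReal hmeas.aemeasurable
      (.of_forall fun t => (ENNReal.mul_ne_top (hφ.apply_ne_top hφ0 _) (hgtop _)).lt_top),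
    ← setIntegral_eq_integral_of_forall_compl_eq_zero (s := Ioi 0)]
  · simp_rw [ENNReal.toReal_mul]
  · intro t ht
    rw [hφ.apply_sub_one_of_nonpos (not_lt.1 ht), zero_mul, ENNReal.toReal_zero]

theorem toReal_setLIntegral_Iic (hφ : IsCapProfile e φ) (hφ0 : φ 0 ≠ ∞) (t : ℝ) :
    (∫⁻ h in Iic (t - 1), φ h).toReal = ∫ u in Ioc 0 t, (φ (u - 1)).toReal := by
  have hprod (h : ℝ) : (Iic (t - 1)).indicator φ h = φ h * (Iic (t - 1)).indicator 1 h := by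
    by_cases hh : h ≤ t - 1 <;> simp [hh]
  have hshift (u : ℝ) : (φ (u - 1)).toReal * ((Iic (t - 1)).indicator 1 (u - 1) : ℝ≥0∞).toReal =
      (Iic t).indicator (fun u => (φ (u - 1)).toReal) u := by
    by_cases hu : u ≤ t <;> simp [hu]
  rw [← lintegral_indicator measurableSet_Iic, lintegral_congr hprod,
    hφ.toReal_lintegral_mul hφ0 (measurable_one.indicator measurableSet_Iic)
      (fun h => by by_cases hh : h ≤ t - 1 <;> simp [hh])]
  simp_rw [hshift]
  rw [setIntegral_indicator measurableSet_Iic, Ioi_inter_Iic]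

end IsCapProfile

end CapProfile

/-! ### The beta distribution -/

section BetaDensity

/-- The radial profile of the density of `betaMeasure β`. -/
noncomputable def betaDensity (β r : ℝ) : ℝ≥0∞ :=
  ENNReal.ofReal (if r ≤ 1 then (β + 1) / π * (1 - r ^ 2) ^ β else 0)

variable {β : ℝ}

theorem measurable_betaDensity : Measurable (betaDensity β) :=
  (Measurable.ite measurableSet_Iic (by fun_prop) measurable_const).ennreal_ofReal

theorem integrableOn_mul_one_sub_sq_rpow (hβ : -1 < β) :
    IntegrableOn (fun r : ℝ => r * (1 - r ^ 2) ^ β) (Ioc 0 1) ∧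
      ∫ r in Ioc (0 : ℝ) 1, r * (1 - r ^ 2) ^ β = 1 / (2 * (β + 1)) := by
  have hβ1 : 0 < β + 1 := by linarith
  set F : ℝ → ℝ := fun r => -(1 / (2 * (β + 1))) * (1 - r ^ 2) ^ (β + 1)
  have hcont : ContinuousOn F (Icc 0 1) := by
    have : Continuous fun r : ℝ => (1 - r ^ 2) ^ (β + 1) :=
      Continuous.rpow_const (by fun_prop) fun _ => .inr hβ1.le
    fun_prop
  have hpos (r : ℝ) (hr : r ∈ Ioo (0 : ℝ) 1) : 0 < 1 - r ^ 2 := by nlinarith [hr.1, hr.2]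
  have hderiv (r : ℝ) (hr : r ∈ Ioo (0 : ℝ) 1) : HasDerivAt F (r * (1 - r ^ 2) ^ β) r := by
    have h := (((hasDerivAt_pow 2 r).const_sub 1).rpow_const (p := β + 1)
      (.inl (hpos r hr).ne')).const_mul (-(1 / (2 * (β + 1))))
    refine h.congr_deriv ?_
    rw [add_sub_cancel_right]
    push_cast
    field
  have hint : IntegrableOn (fun r : ℝ => r * (1 - r ^ 2) ^ β) (Ioc 0 1) :=
    intervalIntegral.integrableOn_deriv_of_nonneg hcont hderiv fun r hr =>
      mul_nonneg hr.1.le (rpow_nonneg (hpos r hr).le β)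
  refine ⟨hint, ?_⟩
  rw [← intervalIntegral.integral_of_le zero_le_one,
    intervalIntegral.integral_eq_sub_of_hasDerivAt_of_le zero_le_one hcont hderiv
      ((intervalIntegrable_iff_integrableOn_Ioc_of_le zero_le_one).2 hint)]
  simp [F, zero_rpow hβ1.ne']

theorem lintegral_ofReal_mul_betaDensity (hβ : -1 < β) :
    ∫⁻ r in Ioi 0, ENNReal.ofReal r * betaDensity β r = ENNReal.ofReal (1 / (2 * π)) := by
  have hβ1 : 0 < β + 1 := by linarith
  obtain ⟨hint, hval⟩ := integrableOn_mul_one_sub_sq_rpow hβ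
  have hind (r : ℝ) (hr : 0 < r) : ENNReal.ofReal r * betaDensity β r = (Iic 1).indicator
      (fun r => ENNReal.ofReal ((β + 1) / π * (r * (1 - r ^ 2) ^ β))) r := by
    by_cases h : r ≤ 1
    · rw [indicator_of_mem (mem_Iic.2 h), betaDensity, if_pos h, ← ENNReal.ofReal_mul hr.le,
        mul_left_comm]
    · simp [betaDensity, h]
  have hconst : 1 / (2 * π) = ∫ r in Ioc (0 : ℝ) 1, (β + 1) / π * (r * (1 - r ^ 2) ^ β) := by
    rw [integral_const_mul, hval]
    field
  rw [setLIntegral_congr_fun measurableSet_Ioi hind, setLIntegral_indicator measurableSet_Iic,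
    Iic_inter_Ioi, hconst, ofReal_integral_eq_lintegral_ofReal (hint.const_mul _)]
  filter_upwards [ae_restrict_mem measurableSet_Ioc] with r hr
  have hsq : 0 ≤ 1 - r ^ 2 := by nlinarith [hr.1, hr.2]
  exact mul_nonneg (div_pos hβ1 pi_pos).le (mul_nonneg hr.1.le (rpow_nonneg hsq β))

theorem isProbabilityMeasure_radialMeasure_betaDensity (hβ : -1 < β) :
    IsProbabilityMeasure (radialMeasure ℂ (betaDensity β)) := by
  refine ⟨?_⟩
  rw [radialMeasure_univ measurable_betaDensity, lintegral_ofReal_mul_betaDensity hβ,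
    ← ENNReal.ofReal_mul two_pi_pos.le, mul_one_div_cancel two_pi_pos.ne', ENNReal.ofReal_one]

theorem lintegral_eq_ofReal_mul_lintegral_comp_mul_left (g : ℝ → ℝ≥0∞) {c : ℝ} (hc : 0 < c) :
    ∫⁻ a, g a = ENNReal.ofReal c * ∫⁻ a, g (c * a) := by
  conv_lhs => rw [← Real.smul_map_volume_mul_left hc.ne', abs_of_pos hc]
  rw [lintegral_smul_measure, (measurableEmbedding_mulLeft₀ hc.ne').lintegral_map, smul_eq_mul]

theorem betaDensity_sqrt {x : ℝ} (hx : 0 ≤ x) :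
    betaDensity β √x = ENNReal.ofReal (if x ≤ 1 then (β + 1) / π * (1 - x) ^ β else 0) := by
  simp [betaDensity, sq_sqrt hx]

theorem betaDensity_sqrt_mul_sqrt_one_sub_sq {a h : ℝ} (hh : h ∈ Ioo (-1 : ℝ) 1) :
    betaDensity β √((√(1 - h ^ 2) * a) ^ 2 + h ^ 2) =
      ENNReal.ofReal ((1 - h ^ 2) ^ β) * betaDensity β √(a ^ 2 + 0 ^ 2) := by
  have hpos : 0 < 1 - h ^ 2 := by nlinarith [hh.1, hh.2]
  have hle : (1 - h ^ 2) * a ^ 2 + h ^ 2 ≤ 1 ↔ a ^ 2 ≤ 1 := by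
    rw [← le_sub_iff_add_le, mul_le_iff_le_one_right hpos]
  have hfactor : 1 - ((1 - h ^ 2) * a ^ 2 + h ^ 2) = (1 - h ^ 2) * (1 - a ^ 2) := by ring
  rw [betaDensity_sqrt (by positivity), betaDensity_sqrt (by positivity), mul_pow,
    sq_sqrt hpos.le, zero_pow two_ne_zero, add_zero, hfactor,
    ← ENNReal.ofReal_mul (rpow_nonneg hpos.le β)]
  simp only [hle]
  split_ifs with ha
  · rw [mul_rpow hpos.le (sub_nonneg.2 ha)]
    ring_nf
  · rw [mul_zero]

theorem ae_betaDensity_sqrt_eq_zero {h : ℝ} (hh : h ∉ Ioo (-1 : ℝ) 1) :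
    ∀ᵐ a : ℝ, betaDensity β √(a ^ 2 + h ^ 2) = 0 := by
  have h1 : 1 ≤ h ^ 2 := by
    rw [one_le_sq_iff_one_le_abs]
    exact not_lt.1 (mt abs_lt.1 hh)
  filter_upwards [Measure.ae_ne volume (0 : ℝ)] with a ha
  have : ¬ a ^ 2 + h ^ 2 ≤ 1 := by linarith [sq_pos_of_ne_zero ha]
  rw [betaDensity_sqrt (by positivity), if_neg this, ENNReal.ofReal_zero]

theorem isCapProfile_chordMass : IsCapProfile (β + 1 / 2) (chordMass (betaDensity β)) := by
  intro h
  by_cases hh : h ∈ Ioo (-1 : ℝ) 1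
  · have hpos : 0 < 1 - h ^ 2 := by nlinarith [hh.1, hh.2]
    rw [indicator_of_mem hh, chordMass,
      lintegral_eq_ofReal_mul_lintegral_comp_mul_left _ (sqrt_pos.2 hpos)]
    simp_rw [betaDensity_sqrt_mul_sqrt_one_sub_sq hh]
    rw [lintegral_const_mul' _ _ ENNReal.ofReal_ne_top, ← mul_assoc,
      ← ENNReal.ofReal_mul (sqrt_nonneg _), sqrt_eq_rpow, ← rpow_add hpos, mul_comm, add_comm]
    rfl
  · rw [indicator_of_notMem hh, mul_zero, chordMass,
      lintegral_congr_ae (ae_betaDensity_sqrt_eq_zero hh), lintegral_zero]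

theorem ofReal_mul_lintegral_betaDensity_mul_betaDensity {h : ℝ} (hh : h ∈ Ioo (-1 : ℝ) 1)
    (r : ℝ) :
    ENNReal.ofReal (√(1 - h ^ 2) * r) * ∫⁻ a, betaDensity β √(a ^ 2 + h ^ 2) *
        betaDensity β √((a + √(1 - h ^ 2) * r) ^ 2 + h ^ 2) =
      ENNReal.ofReal ((1 - h ^ 2) ^ (2 * β + 1)) * (ENNReal.ofReal r *
        ∫⁻ a, betaDensity β √(a ^ 2 + 0 ^ 2) * betaDensity β √((a + r) ^ 2 + 0 ^ 2)) := by
  have hpos : 0 < 1 - h ^ 2 := by nlinarith [hh.1, hh.2]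
  have hs : 0 < √(1 - h ^ 2) := sqrt_pos.2 hpos
  have hβ0 := rpow_nonneg hpos.le β
  have hexp : (1 - h ^ 2) ^ (2 * β + 1) =
      √(1 - h ^ 2) * (√(1 - h ^ 2) * ((1 - h ^ 2) ^ β * (1 - h ^ 2) ^ β)) := by
    rw [← mul_assoc, mul_self_sqrt hpos.le, ← rpow_add hpos, ← two_mul, rpow_add_one hpos.ne',
      mul_comm]
  rw [lintegral_eq_ofReal_mul_lintegral_comp_mul_left _ hs]
  simp_rw [← mul_add, betaDensity_sqrt_mul_sqrt_one_sub_sq hh, mul_mul_mul_comm]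
  rw [lintegral_const_mul' _ _ (by finiteness), hexp, ENNReal.ofReal_mul hs.le,
    ENNReal.ofReal_mul hs.le, ENNReal.ofReal_mul hs.le, ENNReal.ofReal_mul hβ0]
  ring

theorem isCapProfile_chordMoment :
    IsCapProfile (2 * β + 3 / 2) (chordMoment (betaDensity β)) := by
  intro h
  by_cases hh : h ∈ Ioo (-1 : ℝ) 1
  · have hpos : 0 < 1 - h ^ 2 := by nlinarith [hh.1, hh.2]
    have hexp : √(1 - h ^ 2) * (1 - h ^ 2) ^ (2 * β + 1) = (1 - h ^ 2) ^ (2 * β + 3 / 2) := by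
      rw [sqrt_eq_rpow, ← rpow_add hpos]
      ring_nf
    rw [indicator_of_mem hh, chordMoment,
      lintegral_eq_ofReal_mul_lintegral_comp_mul_left _ (sqrt_pos.2 hpos)]
    simp_rw [ofReal_mul_lintegral_betaDensity_mul_betaDensity hh]
    rw [lintegral_const_mul' _ _ ENNReal.ofReal_ne_top, ← mul_assoc,
      ← ENNReal.ofReal_mul (sqrt_nonneg _), hexp, mul_comm]
    rfl
  · have hinner (r : ℝ) :
        ∫⁻ a, betaDensity β √(a ^ 2 + h ^ 2) * betaDensity β √((a + r) ^ 2 + h ^ 2) = 0 := by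
      rw [lintegral_congr_ae ((ae_betaDensity_sqrt_eq_zero hh).mono fun a ha =>
        mul_eq_zero_of_left ha _), lintegral_zero]
    simp_rw [indicator_of_notMem hh, mul_zero, chordMoment, hinner, mul_zero, lintegral_zero]

end BetaDensity

section BetaMeasure

variable {β : ℝ}

attribute [local instance] Complex.finrank_real_complex_fact

theorem lintegral_chordMass (hβ : -1 < β) : ∫⁻ h, chordMass (betaDensity β) h = 1 := by
  have := isProbabilityMeasure_radialMeasure_betaDensity hβ
  rw [← setLIntegral_univ, ← radialMeasure_im_preimage measurable_betaDensity .univ, preimage_univ,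
    measure_univ]

theorem lintegral_chordMoment (hβ : -1 < β) :
    ENNReal.ofReal (2 * π) * ∫⁻ h, chordMoment (betaDensity β) h = 1 := by
  have := isProbabilityMeasure_radialMeasure_betaDensity hβ
  simpa [leftEdgeProb] using (leftEdgeProb_radialMeasure (measurable_betaDensity (β := β)) 0).symm

theorem lintegral_chordMoment_ne_zero_and_ne_top (hβ : -1 < β) :
    ∫⁻ h, chordMoment (betaDensity β) h ≠ 0 ∧ ∫⁻ h, chordMoment (betaDensity β) h ≠ ∞ := by
  have h := lintegral_chordMoment hβ
  refine ⟨right_ne_zero_of_mul_eq_one h, fun htop => ?_⟩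
  rw [htop, ENNReal.mul_top (ENNReal.ofReal_pos.2 two_pi_pos).ne'] at h
  exact ENNReal.top_ne_one h

/-- The probability that a beta distributed point has height greater than `t - 1`, that is, lies
outside the cap of height `t` at the bottom of the unit disk. -/
noncomputable def capComplProb (β t : ℝ) : ℝ :=
  (radialMeasure ℂ (betaDensity β)).real (Complex.im ⁻¹' Ioi (t - 1))

theorem capComplProb_nonneg (β t : ℝ) : 0 ≤ capComplProb β t :=
  measureReal_nonneg

theorem antitone_capComplProb (hβ : -1 < β) : Antitone (capComplProb β) := fun s t h => by
  have := isProbabilityMeasure_radialMeasure_betaDensity hβ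
  exact measureReal_mono (preimage_mono (Ioi_subset_Ioi (by linarith)))

theorem one_sub_capComplProb (hβ : -1 < β) (t : ℝ) :
    1 - capComplProb β t = ∫ u in Ioc 0 t, (chordMass (betaDensity β) (u - 1)).toReal := by
  have := isProbabilityMeasure_radialMeasure_betaDensity hβ
  have hφ := isCapProfile_chordMass (β := β)
  have hfin := hφ.apply_zero_ne_zero_and_ne_top (by simp [lintegral_chordMass hβ])
    (by simp [lintegral_chordMass hβ])
  rw [capComplProb, ← probReal_compl_eq_one_sub (Complex.measurable_im measurableSet_Ioi),
    ← preimage_compl, compl_Ioi, measureReal_def,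
    radialMeasure_im_preimage measurable_betaDensity measurableSet_Iic,
    hφ.toReal_setLIntegral_Iic hfin.2]

theorem exists_tendsto_one_sub_capComplProb (hβ : -1 < β) : ∃ c, 0 < c ∧
    Tendsto (fun t => (1 - capComplProb β t) / t ^ (β + 1 / 2 + 1)) (𝓝[>] 0) (𝓝 c) := by
  have hφ := isCapProfile_chordMass (β := β)
  have hpos := hφ.toReal_apply_zero_pos (by simp [lintegral_chordMass hβ])
    (by simp [lintegral_chordMass hβ])
  have hexp : 0 < β + 1 / 2 + 1 := by linarith
  simp_rw [one_sub_capComplProb hβ]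
  exact ⟨_, by positivity, tendsto_setIntegral_Ioc_div_rpow (by linarith)
    (hφ.measurable.comp (measurable_sub_const 1)).ennreal_toReal hφ.tendsto_toReal_div_rpow⟩

theorem toReal_leftEdgeProb_betaDensity (hβ : -1 < β) (m : ℕ) :
    (leftEdgeProb Complex.orientation (radialMeasure ℂ (betaDensity β)) m).toReal =
      2 * π * ∫ t in Ioi 0,
        (chordMoment (betaDensity β) (t - 1)).toReal * capComplProb β t ^ m := by
  have := isProbabilityMeasure_radialMeasure_betaDensity hβ
  obtain ⟨h0, htop⟩ := lintegral_chordMoment_ne_zero_and_ne_top hβ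
  have hfin := isCapProfile_chordMoment.apply_zero_ne_zero_and_ne_top h0 htop
  rw [leftEdgeProb_radialMeasure measurable_betaDensity, ENNReal.toReal_mul,
    ENNReal.toReal_ofReal two_pi_pos.le, isCapProfile_chordMoment.toReal_lintegral_mul hfin.2
      ((antitone_radialMeasure_im_preimage_Ioi _).measurable.pow_const m)
      fun h => ENNReal.pow_ne_top (measure_ne_top _ _)]
  simp_rw [ENNReal.toReal_pow]
  rfl

theorem exists_tendsto_leftEdgeProb_betaDensity (hβ : -1 < β) : ∃ c, 0 < c ∧
    Tendsto (fun m : ℕ => (m : ℝ) ^ (2 - 1 / (2 * β + 3)) *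
      (leftEdgeProb Complex.orientation (radialMeasure ℂ (betaDensity β)) m).toReal)
      atTop (𝓝 c) := by
  obtain ⟨c, hc, hcap⟩ := exists_tendsto_one_sub_capComplProb hβ
  have hφ := isCapProfile_chordMoment (β := β)
  obtain ⟨h0, htop⟩ := lintegral_chordMoment_ne_zero_and_ne_top hβ
  have hpos := hφ.toReal_apply_zero_pos h0 htop
  have hexp : (2 * β + 3 / 2 + 1) / (β + 1 / 2 + 1) = 2 - 1 / (2 * β + 3) := by
    have : 2 * β + 3 ≠ 0 := by linarith
    rw [show β + 1 / 2 + 1 = (2 * β + 3) / 2 by ring]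
    field_simp
    ring
  have hwatson := tendsto_rpow_mul_setIntegral_mul_pow (by linarith) (by linarith) hc
    (hφ.measurable.comp (measurable_sub_const 1)).ennreal_toReal
    (hφ.integrable_toReal_sub_one htop).integrableOn hφ.tendsto_toReal_div_rpow
    (capComplProb_nonneg β) (antitone_capComplProb hβ) hcap
  have hint := setIntegral_rpow_mul_exp_neg_pos (α := 2 * β + 3 / 2) (γ := β + 1 / 2 + 1)
    (by linarith) (by linarith) hc
  refine ⟨2 * π * _, by positivity, (hwatson.const_mul (2 * π)).congr fun m => ?_⟩
  rw [toReal_leftEdgeProb_betaDensity hβ, hexp, mul_left_comm]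
  rfl

theorem meanF0_add_two (hβ : -1 < β) (m : ℕ) :
    meanF0 β (m + 2) = (m + 2) * (m + 1) *
      (leftEdgeProb Complex.orientation (radialMeasure ℂ (betaDensity β)) m).toReal := by
  have : Fact (Module.finrank ℝ (EuclideanSpace ℝ (Fin 2)) = 2) := ⟨by simp⟩
  let ψ : ℂ ≃ₗᵢ[ℝ] EuclideanSpace ℝ (Fin 2) := Complex.orthonormalBasisOneI.repr
  have hψ : MeasurePreserving ψ (radialMeasure ℂ (betaDensity β)) (betaMeasure β) :=
    measurePreserving_radialMeasure ψ (betaDensity β)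
  have := isProbabilityMeasure_radialMeasure_betaDensity hβ
  have : IsProbabilityMeasure (betaMeasure β) :=
    hψ.map_eq ▸ Measure.isProbabilityMeasure_map hψ.measurable.aemeasurable
  have hac : betaMeasure β ≪ volume := withDensity_absolutelyContinuous _ _
  rw [← leftEdgeProb_map _ ψ hψ]
  exact integral_card_extremePoints _ hac m

end BetaMeasure

end BetaPolytope

open BetaPolytope Filter Topology in
theorem expectation_vertex_count_asymptotics_general {β : ℝ} (hβ : -1 < β) :
    ∃ c : ℝ, 0 < c ∧
      Tendsto (fun n : ℕ => meanF0 β n / (n : ℝ) ^ (1 / (2 * β + 3))) atTop (𝓝 c) := by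
  obtain ⟨c, hc, hlim⟩ := exists_tendsto_leftEdgeProb_betaDensity hβ
  refine ⟨c, hc, (tendsto_add_atTop_iff_nat 2).1 ?_⟩
  have hmul := (tendsto_natCast_add_two_mul_add_one_div (1 / (2 * β + 3))).mul hlim
  rw [one_mul] at hmul
  refine hmul.congr' ?_
  filter_upwards [eventually_gt_atTop 0] with m hm
  have hm' := (Real.rpow_pos_of_pos (Nat.cast_pos.2 hm) (2 - 1 / (2 * β + 3))).ne'
  rw [meanF0_add_two hβ]
  push_cast
  field

/-- for `d ≥ 5` and `β = d/2 - 2`, there exists `c > 0` such that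
`E[f₀(Qₙ)]/n^{1/(d-1)} → c` as `n → ∞`. -/
theorem expectation_vertex_count_asymptotics (d : ℕ) (hd : 5 ≤ d)
    (β : ℝ) (hβ : β = (d : ℝ) / 2 - 2) :
    ∃ c : ℝ, 0 < c ∧
      Filter.Tendsto (fun n : ℕ => meanF0 β n / (n : ℝ) ^ (1 / ((d : ℝ) - 1)))
        Filter.atTop (nhds c) := by
  have hexp : 2 * β + 3 = (d : ℝ) - 1 := by rw [hβ]; ring
  have hd' : (5 : ℝ) ≤ d := Nat.ofNat_le_cast.2 hd
  exact hexp ▸ expectation_vertex_count_asymptotics_general (β := β) (by linarith)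
end

section
/- Fix an integer d ≥ 4 and set β = d/2 − 2. Call an extreme point v of Qₙ an upper vertex if there exists u ∈ ℝ² with u₂ > 0 such that ⟨w, u⟩ ≤ ⟨v, u⟩ for all w ∈ Qₙ, and a lower vertex if the same holds for some u with u₂ < 0; let Uₙ and Lₙ be the numbers of upper and lower vertices of Qₙ, respectively. Then there exist a constant c > 0 and an integer N such that for all n ≥ N: |Cov(Uₙ, Lₙ)| ≤ c·(log n)², where Cov(Uₙ, Lₙ) = E[Uₙ·Lₙ] − E[Uₙ]·E[Lₙ]. -/
open MeasureTheory

/-- The number of upper vertices of `Qₙ`: extreme points admitting an outer normal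
vector with positive second coordinate. -/
noncomputable def upCount {n : ℕ} (ω : Fin n → EuclideanSpace ℝ (Fin 2)) : ℝ :=
  Nat.card {v : EuclideanSpace ℝ (Fin 2) |
    v ∈ Set.extremePoints ℝ (convexHull ℝ (Set.range ω)) ∧
    ∃ u : EuclideanSpace ℝ (Fin 2), 0 < u 1 ∧
      ∀ w ∈ convexHull ℝ (Set.range ω), (inner ℝ w u : ℝ) ≤ inner ℝ v u}

/-- The number of lower vertices of `Qₙ`: extreme points admitting an outer normal
vector with negative second coordinate. -/
noncomputable def lowCount {n : ℕ} (ω : Fin n → EuclideanSpace ℝ (Fin 2)) : ℝ :=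
  Nat.card {v : EuclideanSpace ℝ (Fin 2) |
    v ∈ Set.extremePoints ℝ (convexHull ℝ (Set.range ω)) ∧
    ∃ u : EuclideanSpace ℝ (Fin 2), u 1 < 0 ∧
      ∀ w ∈ convexHull ℝ (Set.range ω), (inner ℝ w u : ℝ) ≤ inner ℝ v u}

/-!
The covariance is in fact bounded. Replacing the points one at a time by independent copies writes
it as a telescoping sum, which by the Cauchy–Schwarz inequality is controlled by the conditional
second moments of the change that the point `x` causes in each count, given `x` (a two-function
Efron–Stein inequality). Inserting `x` changes the number of upper vertices only if `x` is itself an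
upper vertex or hides some, and in either case `x` lies in a cap of the disk, with normal in the
upper half-plane, that contains no further points. Such a cap of height `h` has mass of order
`h ^ (β + 3 / 2)`, hence is empty with probability exponentially small in `n * h ^ (β + 3 / 2)`.

A point for which both counts can change with non-negligible probability is close to the unit circle
and to the horizontal axis. The products of the two changes are thus of order `1 / n` on average,
and the changes themselves of order at most `1 / √n`, so the `n` summands add up to a constant.
-/

open ProbabilityTheory hiding betaMeasure

/-! ### Resampling one coordinate at a time -/

section Resampling

variable {α S Ω : Type*} [MeasurableSpace α] [MeasurableSpace S] [MeasurableSpace Ω]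

theorem lintegral_mul_le_of_lintegral_sq_le {μ : Measure α} {f g : α → ENNReal}
    (hf : AEMeasurable f μ) (hg : AEMeasurable g μ) {a b : ENNReal}
    (hfa : ∫⁻ x, f x ^ 2 ∂μ ≤ a ^ 2) (hgb : ∫⁻ x, g x ^ 2 ∂μ ≤ b ^ 2) :
    ∫⁻ x, f x * g x ∂μ ≤ a * b := by
  have sqrt_le {h : α → ENNReal} {c : ENNReal} (hc : ∫⁻ x, h x ^ 2 ∂μ ≤ c ^ 2) :
      (∫⁻ x, h x ^ (2 : ℝ) ∂μ) ^ (1 / 2 : ℝ) ≤ c := by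
    simp only [ENNReal.rpow_ofNat]
    calc (∫⁻ x, h x ^ 2 ∂μ) ^ (1 / 2 : ℝ) ≤ (c ^ 2) ^ (1 / 2 : ℝ) := by gcongr
      _ = c := by rw [← ENNReal.rpow_ofNat, ← ENNReal.rpow_mul]; norm_num
  exact (ENNReal.lintegral_mul_le_Lp_mul_Lq μ Real.HolderConjugate.two_two hf hg).trans
    (mul_le_mul' (sqrt_le hfa) (sqrt_le hgb))

variable {μ : Measure α} {ν : Measure S} {P : Measure Ω} {f g : α × S → ℝ} {A B : Ω → S}

theorem lintegral_enorm_mul_enorm_le [SFinite P] (hA : MeasurePreserving A P ν)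
    (hB : MeasurePreserving B P ν) (hf : Measurable f) (hg : Measurable g) {F G : α → ENNReal}
    (hfF : ∀ᵐ x ∂μ, ∫⁻ s, ‖f (x, s)‖ₑ ^ 2 ∂ν ≤ F x ^ 2)
    (hgG : ∀ᵐ x ∂μ, ∫⁻ s, ‖g (x, s)‖ₑ ^ 2 ∂ν ≤ G x ^ 2)
    {X : Type*} [MeasurableSpace X] {κ : Measure X} {a b : X → α}
    (ha : MeasurePreserving a κ μ) (hb : MeasurePreserving b κ μ) :
    ∫⁻ z, ‖f (a z.1, A z.2)‖ₑ * ‖g (b z.1, B z.2)‖ₑ ∂(κ.prod P) ≤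
      ∫⁻ p, F (a p) * G (b p) ∂κ := by
  have hAm := hA.measurable
  have hBm := hB.measurable
  have ham := ha.measurable
  have hbm := hb.measurable
  rw [lintegral_prod _ (by fun_prop)]
  refine lintegral_mono_ae ?_
  filter_upwards [ha.quasiMeasurePreserving.ae hfF, hb.quasiMeasurePreserving.ae hgG]
    with p hfp hgp
  refine lintegral_mul_le_of_lintegral_sq_le (by fun_prop) (by fun_prop) ?_ ?_
  · rwa [hA.lintegral_comp (f := fun s => ‖f (a p, s)‖ₑ ^ 2) (by fun_prop)]
  · rwa [hB.lintegral_comp (f := fun s => ‖g (b p, s)‖ₑ ^ 2) (by fun_prop)]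

variable [IsProbabilityMeasure μ] [IsProbabilityMeasure P]

theorem integral_mul_sub_resampled_eq_sub (hA : MeasurePreserving A P ν)
    (hB : MeasurePreserving B P ν) {f₀ : S → ℝ} (hf : MemLp f 2 (μ.prod ν))
    (hg : MemLp g 2 (μ.prod ν)) (hf₀ : MemLp f₀ 2 ν) :
    ∫ z, f (z.1.1, A z.2) * (g (z.1.1, B z.2) - g (z.1.2, B z.2)) ∂((μ.prod μ).prod P) =
      ∫ z, (f (z.1.1, A z.2) - f₀ (A z.2)) * (g (z.1.1, B z.2) - g (z.1.2, B z.2))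
        ∂((μ.prod μ).prod P) := by
  have hfA := hf.comp_measurePreserving ((measurePreserving_fst (μ := μ) (ν := μ)).prod hA)
  have hgB := hg.comp_measurePreserving ((measurePreserving_fst (μ := μ) (ν := μ)).prod hB)
  have hgB' := hg.comp_measurePreserving ((measurePreserving_snd (μ := μ) (ν := μ)).prod hB)
  have hf₀A := hf₀.comp_measurePreserving (hA.comp (measurePreserving_snd (μ := μ.prod μ)))
  have swap_invariant : ∫ z, f₀ (A z.2) * g (z.1.1, B z.2) ∂((μ.prod μ).prod P) =
      ∫ z, f₀ (A z.2) * g (z.1.2, B z.2) ∂((μ.prod μ).prod P) :=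
    (((Measure.measurePreserving_swap (μ := μ) (ν := μ)).prod
      (MeasurePreserving.id P)).integral_comp'
      (f := MeasurableEquiv.prodCongr MeasurableEquiv.prodComm (MeasurableEquiv.refl Ω))
      fun z => f₀ (A z.2) * g (z.1.2, B z.2))
  have vanishes : ∫ z, f₀ (A z.2) * (g (z.1.1, B z.2) - g (z.1.2, B z.2))
      ∂((μ.prod μ).prod P) = 0 := by
    simp_rw [mul_sub]
    exact (integral_sub (hf₀A.integrable_mul hgB) (hf₀A.integrable_mul hgB')).trans
      (sub_eq_zero.2 swap_invariant)
  simp_rw [sub_mul]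
  refine .symm <| (integral_sub (hfA.integrable_mul (hgB.sub hgB'))
    (hf₀A.integrable_mul (hgB.sub hgB'))).trans ?_
  exact (congrArg _ vanishes).trans (sub_zero _)

theorem enorm_integral_mul_sub_resampled_le (hA : MeasurePreserving A P ν)
    (hB : MeasurePreserving B P ν) {f₀ g₀ : S → ℝ} {F G : α → ENNReal}
    (hf : MemLp f 2 (μ.prod ν)) (hg : MemLp g 2 (μ.prod ν)) (hf₀ : MemLp f₀ 2 ν)
    (hfm : Measurable f) (hgm : Measurable g) (hf₀m : Measurable f₀) (hg₀m : Measurable g₀)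
    (hFm : Measurable F) (hGm : Measurable G)
    (hF : ∀ᵐ x ∂μ, ∫⁻ s, ‖f (x, s) - f₀ s‖ₑ ^ 2 ∂ν ≤ F x ^ 2)
    (hG : ∀ᵐ x ∂μ, ∫⁻ s, ‖g (x, s) - g₀ s‖ₑ ^ 2 ∂ν ≤ G x ^ 2) :
    ‖∫ z, f (z.1.1, A z.2) * (g (z.1.1, B z.2) - g (z.1.2, B z.2)) ∂((μ.prod μ).prod P)‖ₑ ≤
      ∫⁻ x, F x * G x ∂μ + (∫⁻ x, F x ∂μ) * ∫⁻ x, G x ∂μ := by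
  have hAm := hA.measurable
  have hBm := hB.measurable
  let Δf : α × S → ℝ := fun p => f p - f₀ p.2
  let Δg : α × S → ℝ := fun p => g p - g₀ p.2
  have hΔf : Measurable Δf := by fun_prop
  have hΔg : Measurable Δg := by fun_prop
  rw [integral_mul_sub_resampled_eq_sub hA hB hf hg hf₀]
  calc _ ≤ ∫⁻ z, ‖Δf (z.1.1, A z.2) * (g (z.1.1, B z.2) - g (z.1.2, B z.2))‖ₑ
        ∂((μ.prod μ).prod P) := enorm_integral_le_lintegral_enorm _
    _ ≤ ∫⁻ z, (‖Δf (z.1.1, A z.2)‖ₑ * ‖Δg (z.1.1, B z.2)‖ₑ +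
          ‖Δf (z.1.1, A z.2)‖ₑ * ‖Δg (z.1.2, B z.2)‖ₑ) ∂((μ.prod μ).prod P) := by
        refine lintegral_mono fun z => ?_
        rw [enorm_mul, ← mul_add,
          ← sub_sub_sub_cancel_right (g (z.1.1, B z.2)) (g (z.1.2, B z.2)) (g₀ (B z.2))]
        exact mul_le_mul_right (enorm_sub_le (a := Δg (z.1.1, B z.2))) _
    _ ≤ ∫⁻ p, F p.1 * G p.1 ∂(μ.prod μ) + ∫⁻ p, F p.1 * G p.2 ∂(μ.prod μ) := by
        rw [lintegral_add_left (by fun_prop)]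
        exact add_le_add
          (lintegral_enorm_mul_enorm_le hA hB hΔf hΔg hF hG measurePreserving_fst
            measurePreserving_fst)
          (lintegral_enorm_mul_enorm_le hA hB hΔf hΔg hF hG measurePreserving_fst
            measurePreserving_snd)
    _ = _ := by
        rw [measurePreserving_fst.lintegral_comp (f := fun x => F x * G x) (by fun_prop),
          lintegral_prod_mul hFm.aemeasurable hGm.aemeasurable]

variable {n : ℕ}

/-- The sample whose `i`-th point is the second entry of the pair `W i` if `b i` holds, and the
first entry otherwise. -/
def mix (b : Fin n → Bool) (W : Fin n → α × α) (i : Fin n) : α :=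
  if b i then (W i).2 else (W i).1

omit [MeasurableSpace α] in
theorem mix_insertNth (b : Fin (n + 1) → Bool) (i : Fin (n + 1)) (p : α × α)
    (V : Fin n → α × α) :
    mix b (i.insertNth p V) =
      i.insertNth (if b i then p.2 else p.1) (mix (fun j => b (i.succAbove j)) V) := by
  ext j
  cases j using i.succAboveCases <;> simp [mix]

theorem measurePreserving_mix (b : Fin n → Bool) :
    MeasurePreserving (mix b) (Measure.pi fun _ => μ.prod μ) (Measure.pi fun _ => μ) :=
  measurePreserving_pi (f := fun i (p : α × α) => if b i then p.2 else p.1)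
    (fun _ => μ.prod μ) (fun _ => μ) fun i => by
      cases b i
      · simpa using measurePreserving_fst
      · simpa using measurePreserving_snd

variable {f g : (Fin n → α) → ℝ}

theorem integral_mul_integral_eq_integral_mix :
    (∫ ω, f ω ∂(Measure.pi fun _ => μ)) * ∫ ω, g ω ∂(Measure.pi fun _ => μ) =
      ∫ W, f (mix (fun _ => false) W) * g (mix (fun _ => true) W)
        ∂(Measure.pi fun _ => μ.prod μ) := by
  rw [← integral_prod_mul, ← (measurePreserving_arrowProdEquivProdArrow α α (Fin n)
    (fun _ => μ) (fun _ => μ)).integral_comp']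
  rfl

theorem covariance_eq_sum_integral_mul_sub_mix (hf : MemLp f 2 (Measure.pi fun _ => μ))
    (hg : MemLp g 2 (Measure.pi fun _ => μ)) :
    cov[f, g; Measure.pi fun _ => μ] =
      ∑ i : Fin n, ∫ W, f (mix (fun _ => false) W) *
        (g (mix (fun j => decide (j < i)) W) - g (mix (fun j => decide (j ≤ i)) W))
          ∂(Measure.pi fun _ => μ.prod μ) := by
  let I (b : Fin n → Bool) : ℝ :=
    ∫ W, f (mix (fun _ => false) W) * g (mix b W) ∂(Measure.pi fun _ => μ.prod μ)
  have integrable_mix (b : Fin n → Bool) :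
      Integrable (fun W => f (mix (fun _ => false) W) * g (mix b W))
        (Measure.pi fun _ => μ.prod μ) :=
    (hf.comp_measurePreserving (measurePreserving_mix _)).integrable_mul
      (hg.comp_measurePreserving (measurePreserving_mix b))
  have integral_mul : ∫ ω, f ω * g ω ∂(Measure.pi fun _ => μ) = I fun _ => false := by
    rw [← (measurePreserving_mix (μ := μ) (n := n) fun _ => false).map_eq,
      integral_map (measurePreserving_mix _).aemeasurable]
    rw [(measurePreserving_mix (μ := μ) _).map_eq]
    exact (hf.integrable_mul hg).aestronglyMeasurable
  rw [covariance_eq_sub hf hg, integral_mul_integral_eq_integral_mix]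
  simp only [Pi.mul_apply, mul_sub, integral_sub (integrable_mix _) (integrable_mix _),
    Fin.lt_def, Fin.le_def, ← Nat.lt_add_one_iff]
  rw [integral_mul, Fin.sum_univ_eq_sum_range (fun i => I (fun j => decide (j.val < i)) -
    I (fun j => decide (j.val < i + 1))) n, Finset.sum_range_sub']
  simp [I]

variable {f g : (Fin (n + 1) → α) → ℝ}

theorem integral_mul_sub_mix_eq (i : Fin (n + 1)) :
    ∫ W, f (mix (fun _ => false) W) * (g (mix (fun j => decide (j < i)) W) -
        g (mix (fun j => decide (j ≤ i)) W)) ∂(Measure.pi fun _ => μ.prod μ) =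
      ∫ z, f (i.insertNth z.1.1 (mix (fun _ => false) z.2)) *
        (g (i.insertNth z.1.1 (mix (fun j => decide (i.succAbove j < i)) z.2)) -
          g (i.insertNth z.1.2 (mix (fun j => decide (i.succAbove j < i)) z.2)))
        ∂((μ.prod μ).prod (Measure.pi fun _ => μ.prod μ)) := by
  rw [← (measurePreserving_piFinSuccAbove (fun _ => μ.prod μ) i).symm.integral_comp']
  refine integral_congr_ae (.of_forall fun z => ?_)
  change f (mix _ (i.insertNth z.1 z.2)) * (g (mix _ (i.insertNth z.1 z.2)) -
    g (mix _ (i.insertNth z.1 z.2))) = _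
  simp [mix_insertNth, (i.succAbove_ne _).le_iff_lt]

/-- A two-function version of the Efron–Stein inequality. -/
theorem enorm_covariance_le_sum (hf : MemLp f 2 (Measure.pi fun _ => μ))
    (hg : MemLp g 2 (Measure.pi fun _ => μ)) (hfm : Measurable f) (hgm : Measurable g)
    {f₀ g₀ : Fin (n + 1) → (Fin n → α) → ℝ} (hf₀ : ∀ i, MemLp (f₀ i) 2 (Measure.pi fun _ => μ))
    (hf₀m : ∀ i, Measurable (f₀ i)) (hg₀m : ∀ i, Measurable (g₀ i))
    {F G : Fin (n + 1) → α → ENNReal} (hFm : ∀ i, Measurable (F i)) (hGm : ∀ i, Measurable (G i))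
    (hF : ∀ i, ∀ᵐ x ∂μ, ∫⁻ V, ‖f (i.insertNth (α := fun _ => α) x V) - f₀ i V‖ₑ ^ 2
      ∂(Measure.pi fun _ => μ) ≤ F i x ^ 2)
    (hG : ∀ i, ∀ᵐ x ∂μ, ∫⁻ V, ‖g (i.insertNth (α := fun _ => α) x V) - g₀ i V‖ₑ ^ 2
      ∂(Measure.pi fun _ => μ) ≤ G i x ^ 2) :
    ‖cov[f, g; Measure.pi fun _ => μ]‖ₑ ≤
      ∑ i, (∫⁻ x, F i x * G i x ∂μ + (∫⁻ x, F i x ∂μ) * ∫⁻ x, G i x ∂μ) := by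
  rw [covariance_eq_sum_integral_mul_sub_mix hf hg]
  refine (enorm_sum_le _ _).trans (Finset.sum_le_sum fun i _ => ?_)
  let insertAt (p : α × (Fin n → α)) : Fin (n + 1) → α := i.insertNth p.1 p.2
  have hinsertAt : MeasurePreserving insertAt (μ.prod (Measure.pi fun _ => μ))
    (Measure.pi fun _ => μ) := (measurePreserving_piFinSuccAbove (fun _ => μ) i).symm
  rw [integral_mul_sub_mix_eq]
  exact enorm_integral_mul_sub_resampled_le (measurePreserving_mix fun _ => false)
    (measurePreserving_mix fun j => decide (i.succAbove j < i))
    (hf.comp_measurePreserving hinsertAt) (hg.comp_measurePreserving hinsertAt) (hf₀ i)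
    (hfm.comp hinsertAt.measurable) (hgm.comp hinsertAt.measurable)
    (hf₀m i) (hg₀m i) (hFm i) (hGm i) (hF i) (hG i)

end Resampling

/-! ### A Laplace transform bound -/

theorem lintegral_Ioi_mul_exp_neg_mul {t : ℝ} (ht : 0 < t) (y : ℝ) :
    ∫⁻ a in Set.Ioi y, ENNReal.ofReal (t * Real.exp (-(t * a))) =
      ENNReal.ofReal (Real.exp (-(t * y))) := by
  have hint := (integrableOn_exp_mul_Ioi (neg_lt_zero.2 ht) y).const_mul t
  simp only [neg_mul] at hint
  rw [← ofReal_integral_eq_lintegral_ofReal hint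
    (.of_forall fun a => by positivity), integral_const_mul]
  have := integral_exp_mul_Ioi (neg_lt_zero.2 ht) y
  simp only [neg_mul] at this
  rw [this]
  field_simp

theorem lintegral_Ioi_rpow_mul_exp_neg_mul {θ t : ℝ} (hθ : -1 < θ) (ht : 0 < t) :
    ∫⁻ a in Set.Ioi 0, ENNReal.ofReal (a ^ θ * Real.exp (-(t * a))) =
      ENNReal.ofReal (Real.Gamma (θ + 1) / t ^ (θ + 1)) := by
  have hint : IntegrableOn (fun a : ℝ => a ^ θ * Real.exp (-(t * a))) (Set.Ioi 0) := by
    simpa using integrableOn_rpow_mul_exp_neg_mul_rpow hθ one_pos ht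
  have hgamma := Real.integral_rpow_mul_exp_neg_mul_Ioi (neg_lt_iff_pos_add.1 hθ) ht
  rw [← ofReal_integral_eq_lintegral_ofReal hint ?_]
  · rw [add_sub_cancel_right] at hgamma
    rw [hgamma, Real.div_rpow zero_le_one ht.le, Real.one_rpow, one_div_mul_eq_div]
  · filter_upwards [ae_restrict_mem measurableSet_Ioi] with a ha
    exact mul_nonneg (Real.rpow_nonneg (le_of_lt ha) θ) (Real.exp_pos _).le

theorem lintegral_exp_neg_mul_le {α : Type*} [MeasurableSpace α] {μ : Measure α} [SFinite μ]
    {ψ : α → ℝ} (hψ : Measurable ψ) (hψ_nonneg : ∀ x, 0 ≤ ψ x) {K θ t : ℝ} (hθ : -1 < θ)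
    (ht : 0 < t) (hμ : ∀ a, 0 < a → μ {x | ψ x < a} ≤ ENNReal.ofReal (K * a ^ θ)) :
    ∫⁻ x, ENNReal.ofReal (Real.exp (-(t * ψ x))) ∂μ ≤
      ENNReal.ofReal (K * Real.Gamma (θ + 1) * t ^ (-θ)) := by
  let w (a : ℝ) : ENNReal := ENNReal.ofReal (t * Real.exp (-(t * a)))
  have hw : Measurable w := by fun_prop
  calc ∫⁻ x, ENNReal.ofReal (Real.exp (-(t * ψ x))) ∂μ
      = ∫⁻ x, (∫⁻ a in Set.Ioi 0, (Set.Ioi (ψ x)).indicator w a) ∂μ := by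
        refine lintegral_congr fun x => ?_
        rw [setLIntegral_indicator measurableSet_Ioi, Set.Ioi_inter_Ioi,
          sup_eq_left.2 (hψ_nonneg x), lintegral_Ioi_mul_exp_neg_mul ht]
    _ = ∫⁻ a in Set.Ioi 0, (∫⁻ x, {x | ψ x < a}.indicator (fun _ => w a) x ∂μ) := by
        refine lintegral_lintegral_swap (Measurable.aemeasurable ?_)
        exact (hw.comp measurable_snd).indicator
          (measurableSet_lt (hψ.comp measurable_fst) measurable_snd)
    _ ≤ ∫⁻ a in Set.Ioi 0, ENNReal.ofReal (K * t * (a ^ θ * Real.exp (-(t * a)))) := by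
        refine setLIntegral_mono (by fun_prop) fun a ha => ?_
        rw [lintegral_indicator_const (measurableSet_lt hψ measurable_const)]
        refine (mul_le_mul_right (hμ a ha) _).trans_eq ?_
        rw [← ENNReal.ofReal_mul (by positivity)]
        ring_nf
    _ = ENNReal.ofReal (K * Real.Gamma (θ + 1) * t ^ (-θ)) := by
        have hgamma := lintegral_Ioi_rpow_mul_exp_neg_mul hθ ht
        have hquot_nonneg : 0 ≤ Real.Gamma (θ + 1) / t ^ (θ + 1) := by
          have := Real.Gamma_pos_of_pos (neg_lt_iff_pos_add.1 hθ)
          positivity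
        have hnonneg : ∀ a ∈ Set.Ioi (0 : ℝ), 0 ≤ a ^ θ * Real.exp (-(t * a)) :=
          fun a ha => mul_nonneg (Real.rpow_nonneg (le_of_lt ha) θ) (Real.exp_pos _).le
        rw [setLIntegral_congr_fun measurableSet_Ioi fun a ha =>
            ENNReal.ofReal_mul' (hnonneg a ha), lintegral_const_mul _ (by fun_prop), hgamma,
          ← ENNReal.ofReal_mul' hquot_nonneg,
          Real.rpow_neg ht.le, Real.rpow_add_one ht.ne']
        congr 1
        field_simp

/-! ### Vertices of the convex hull of a finite family -/

section ConvexHull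

variable {ι E : Type*} [NormedAddCommGroup E] [InnerProductSpace ℝ E]

/-- `ω j` is the unique point of the family `ω` that is farthest in the direction `u`. -/
def IsUniqueFarthest (ω : ι → E) (u : E) (j : ι) : Prop :=
  ∀ k, k ≠ j → inner ℝ (ω k) u < inner ℝ (ω j) u

theorem convex_insert_setOf_inner_lt (x u : E) :
    Convex ℝ (insert x {y | inner ℝ y u < inner ℝ x u}) := by
  refine convex_iff_forall_pos.2 fun y hy z hz a b ha hb hab => ?_
  have combination : inner ℝ (a • y + b • z) u = a * inner ℝ y u + b * inner ℝ z u := by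
    rw [inner_add_left, real_inner_smul_left, real_inner_smul_left]
  obtain rfl := eq_sub_of_add_eq' hab
  rcases hy with rfl | hy <;> rcases hz with rfl | hz <;>
    simp only [Set.mem_insert_iff, Set.mem_ofPred_eq, combination] at *
  · exact .inl (Convex.combo_self hab _)
  all_goals right; nlinarith

theorem IsUniqueFarthest.convexHull_subset {ω : ι → E} {u : E} {j : ι}
    (h : IsUniqueFarthest ω u j) :
    convexHull ℝ (Set.range ω) ⊆ insert (ω j) {y | inner ℝ y u < inner ℝ (ω j) u} := by
  refine convexHull_min ?_ (convex_insert_setOf_inner_lt _ _)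
  rintro _ ⟨k, rfl⟩
  by_cases hk : k = j
  · exact .inl (congrArg ω hk)
  · exact .inr (h k hk)

theorem IsUniqueFarthest.inner_le {ω : ι → E} {u : E} {j : ι} (h : IsUniqueFarthest ω u j)
    {y : E} (hy : y ∈ convexHull ℝ (Set.range ω)) : inner ℝ y u ≤ inner ℝ (ω j) u := by
  rcases h.convexHull_subset hy with rfl | hy
  · exact le_rfl
  · exact le_of_lt hy

theorem IsUniqueFarthest.mem_extremePoints {ω : ι → E} {u : E} {j : ι}
    (h : IsUniqueFarthest ω u j) :
    ω j ∈ Set.extremePoints ℝ (convexHull ℝ (Set.range ω)) := by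
  refine exposedPoints_subset_extremePoints
    ⟨subset_convexHull ℝ _ ⟨j, rfl⟩, innerSL ℝ u, fun y hy => ?_⟩
  simp only [innerSL_apply_apply, real_inner_comm _ u]
  refine ⟨h.inner_le hy, fun hle => ?_⟩
  exact (h.convexHull_subset hy).resolve_right hle.not_gt

variable [Finite ι] [CompleteSpace E]

theorem exists_isUniqueFarthest_of_mem_extremePoints {ω : ι → E} (hω : Function.Injective ω)
    {j : ι} (hj : ω j ∈ Set.extremePoints ℝ (convexHull ℝ (Set.range ω))) :
    ∃ u, IsUniqueFarthest ω u j := by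
  have hconv := convex_convexHull ℝ (Set.range ω)
  have not_mem : ω j ∉ convexHull ℝ (Set.range ω \ {ω j}) := fun hmem =>
    (hconv.mem_extremePoints_iff_mem_sdiff_convexHull_sdiff.1 hj).2
      (convexHull_mono (Set.sdiff_subset_sdiff_left (subset_convexHull ℝ _)) hmem)
  obtain ⟨φ, s, hlt, hs⟩ := geometric_hahn_banach_closed_point (convex_convexHull ℝ _)
    ((Set.finite_range ω).sdiff.isClosed_convexHull ℝ) not_mem
  refine ⟨(InnerProductSpace.toDual ℝ E).symm φ, fun k hk => ?_⟩
  rw [real_inner_comm, InnerProductSpace.toDual_symm_apply, real_inner_comm,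
    InnerProductSpace.toDual_symm_apply]
  exact (hlt _ (subset_convexHull ℝ _ ⟨⟨k, rfl⟩, hω.ne hk⟩)).trans hs

theorem setOf_extremePoints_supported_eq_image {ω : ι → E} (hω : Function.Injective ω) {O : Set E}
    (hO : IsOpen O) :
    {v | v ∈ Set.extremePoints ℝ (convexHull ℝ (Set.range ω)) ∧
      ∃ u ∈ O, ∀ w ∈ convexHull ℝ (Set.range ω), inner ℝ w u ≤ inner ℝ v u} =
      ω '' {j | ∃ u ∈ O, IsUniqueFarthest ω u j} := by
  ext v
  constructor
  · rintro ⟨hv, u, hu, hsupp⟩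
    obtain ⟨j, rfl⟩ := extremePoints_convexHull_subset hv
    obtain ⟨v, hv⟩ := exists_isUniqueFarthest_of_mem_extremePoints hω hv
    have hcont : Continuous fun ε : ℝ => u + ε • v := by fun_prop
    obtain ⟨ε, hεO, hε⟩ := (((hcont.tendsto' 0 u (by simp)).mono_left
      nhdsWithin_le_nhds).eventually (hO.mem_nhds hu)).and self_mem_nhdsWithin
      |>.exists (f := nhdsWithin 0 (Set.Ioi 0))
    refine ⟨j, ⟨u + ε • v, hεO, fun k hk => ?_⟩, rfl⟩
    simp only [inner_add_right, inner_smul_right]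
    exact add_lt_add_of_le_of_lt (hsupp _ (subset_convexHull ℝ _ ⟨k, rfl⟩))
      (mul_lt_mul_of_pos_left (hv k hk) hε)
  · rintro ⟨j, ⟨u, hu, hj⟩, rfl⟩
    exact ⟨hj.mem_extremePoints, u, hu, fun w hw => hj.inner_le hw⟩

end ConvexHull

/-! ### The beta distribution on the disk -/

section BetaMeasure

/-- The Euclidean plane. -/
abbrev Plane := EuclideanSpace ℝ (Fin 2)

/-- The density of `betaMeasure β` at distance `r ≤ 1` from the origin. -/
noncomputable def betaProfile (β r : ℝ) : ℝ :=
  (β + 1) / Real.pi * (1 - r ^ 2) ^ β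

@[fun_prop]
theorem measurable_betaProfile (β : ℝ) : Measurable (betaProfile β) := by
  unfold betaProfile
  fun_prop

theorem betaMeasure_apply (β : ℝ) {s : Set Plane} (hs : MeasurableSet s) :
    betaMeasure β s =
      ∫⁻ x in s ∩ Metric.closedBall 0 1, ENNReal.ofReal (betaProfile β ‖x‖) := by
  rw [betaMeasure, withDensity_apply _ hs, Set.inter_comm,
    ← setLIntegral_indicator measurableSet_closedBall]
  refine lintegral_congr fun x => ?_
  by_cases hx : ‖x‖ ≤ 1 <;> simp [hx, betaProfile]

theorem betaMeasure_absolutelyContinuous (β : ℝ) : betaMeasure β ≪ volume :=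
  withDensity_absolutelyContinuous _ _

theorem ae_norm_le_one (β : ℝ) : ∀ᵐ x ∂betaMeasure β, ‖x‖ ≤ 1 := by
  have compl_eq : {x : Plane | ¬‖x‖ ≤ 1} = (Metric.closedBall 0 1)ᶜ := by ext; simp
  rw [ae_iff, compl_eq, betaMeasure_apply β measurableSet_closedBall.compl]
  simp

theorem measurePreserving_betaMeasure (β : ℝ) (f : Plane ≃ₗᵢ[ℝ] Plane) :
    MeasurePreserving f (betaMeasure β) (betaMeasure β) := by
  have hf := f.continuous.measurable
  refine ⟨hf, Measure.ext fun s hs => ?_⟩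
  have preimage_eq : f ⁻¹' s ∩ Metric.closedBall 0 1 = f ⁻¹' (s ∩ Metric.closedBall 0 1) := by
    ext; simp
  rw [Measure.map_apply hf hs, betaMeasure_apply β hs, betaMeasure_apply β (hf hs), preimage_eq,
    ← f.measurePreserving.setLIntegral_comp_preimage (hs.inter measurableSet_closedBall)
      (f := fun x => ENNReal.ofReal (betaProfile β ‖x‖)) (by fun_prop)]
  simp

theorem ofReal_mul_volume_le_betaMeasure (β : ℝ) {s : Set Plane} (hs : MeasurableSet s)
    (hs_ball : s ⊆ Metric.closedBall 0 1) {a : ℝ} (ha : ∀ x ∈ s, a ≤ betaProfile β ‖x‖) :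
    ENNReal.ofReal a * volume s ≤ betaMeasure β s := by
  rw [betaMeasure_apply β hs, Set.inter_eq_left.2 hs_ball, ← setLIntegral_const]
  exact setLIntegral_mono' hs fun x hx => ENNReal.ofReal_le_ofReal (ha x hx)

theorem betaMeasure_le_ofReal_mul_volume (β : ℝ) {s : Set Plane} (hs : MeasurableSet s) {a : ℝ}
    (ha : ∀ x ∈ s, ‖x‖ ≤ 1 → betaProfile β ‖x‖ ≤ a) :
    betaMeasure β s ≤ ENNReal.ofReal a * volume (s ∩ Metric.closedBall 0 1) := by
  rw [betaMeasure_apply β hs, ← setLIntegral_const]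
  exact setLIntegral_mono' (hs.inter measurableSet_closedBall) fun x hx =>
    ENNReal.ofReal_le_ofReal (ha x hx.1 (mem_closedBall_zero_iff.1 hx.2))

theorem betaProfile_nonneg {β r : ℝ} (hβ : 0 ≤ β) (hr : 0 ≤ r) (hr1 : r ≤ 1) :
    0 ≤ betaProfile β r := by
  have : 0 ≤ 1 - r ^ 2 := by nlinarith
  unfold betaProfile
  positivity

theorem continuous_mul_betaProfile {β : ℝ} (hβ : 0 ≤ β) :
    Continuous fun y => y * betaProfile β y := by
  have : Continuous fun y : ℝ => (1 - y ^ 2) ^ β :=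
    (by fun_prop : Continuous fun y : ℝ => 1 - y ^ 2).rpow_const fun _ => .inr hβ
  unfold betaProfile
  fun_prop

theorem integral_mul_betaProfile {β : ℝ} (hβ : 0 ≤ β) (r : ℝ) :
    ∫ y in r..1, y * betaProfile β y = (1 - r ^ 2) ^ (β + 1) / (2 * Real.pi) := by
  have hasDerivAt_primitive (y : ℝ) :
      HasDerivAt (fun y : ℝ => -(1 - y ^ 2) ^ (β + 1) / (2 * Real.pi)) (y * betaProfile β y) y := by
    refine ((((hasDerivAt_pow 2 y).const_sub 1).rpow_const
      (p := β + 1) (.inr (by linarith))).neg.div_const (2 * Real.pi)).congr_deriv ?_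
    simp only [betaProfile, add_sub_cancel_right]
    field_simp
    ring
  rw [intervalIntegral.integral_eq_sub_of_hasDerivAt (fun y _ => hasDerivAt_primitive y)
    ((continuous_mul_betaProfile hβ).intervalIntegrable _ _)]
  have : β + 1 ≠ 0 := by positivity
  simp [Real.zero_rpow this]
  ring

theorem betaMeasure_setOf_le_norm {β : ℝ} (hβ : 0 ≤ β) {r : ℝ} (hr : 0 ≤ r) (hr1 : r ≤ 1) :
    betaMeasure β {x | r ≤ ‖x‖} = ENNReal.ofReal ((1 - r ^ 2) ^ (β + 1)) := by
  let ρ : ℝ → ℝ := (Set.Icc r 1).indicator (betaProfile β)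
  have mul_ρ (y : ℝ) : y ^ (Module.finrank ℝ Plane - 1) • ρ y =
      (Set.Icc r 1).indicator (fun y => y * betaProfile β y) y := by
    simp [ρ, Set.indicator_apply]
  have integrable_ρ : Integrable fun x : Plane => ρ ‖x‖ := by
    rw [integrable_fun_norm_addHaar]
    simp only [mul_ρ]
    exact ((continuous_mul_betaProfile hβ).integrableOn_Icc.integrable_indicator
      measurableSet_Icc).integrableOn
  have integral_ρ : ∫ x : Plane, ρ ‖x‖ = (1 - r ^ 2) ^ (β + 1) := by
    rw [integral_fun_norm_addHaar]
    simp only [mul_ρ]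
    rw [← integral_Ici_eq_integral_Ioi, setIntegral_indicator measurableSet_Icc,
      Set.inter_eq_right.2 (Set.Icc_subset_Ici_self.trans (Set.Ici_subset_Ici.2 hr)),
      integral_Icc_eq_integral_Ioc, ← intervalIntegral.integral_of_le hr1,
      integral_mul_betaProfile hβ]
    simp [Measure.real, Real.pi_pos.le]
    field_simp
  have hmeas : MeasurableSet {x : Plane | r ≤ ‖x‖} :=
    measurableSet_le measurable_const measurable_norm
  rw [betaMeasure_apply β hmeas, ← lintegral_indicator (hmeas.inter measurableSet_closedBall),
    ← integral_ρ, ofReal_integral_eq_lintegral_ofReal integrable_ρ]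
  · refine lintegral_congr fun x => ?_
    by_cases h : r ≤ ‖x‖ ∧ ‖x‖ ≤ 1 <;> simp [ρ, h]
  · refine .of_forall fun x => Set.indicator_nonneg (fun y hy => ?_) _
    exact betaProfile_nonneg hβ (hr.trans hy.1) hy.2

theorem isProbabilityMeasure_betaMeasure {β : ℝ} (hβ : 0 ≤ β) :
    IsProbabilityMeasure (betaMeasure β) :=
  ⟨by simpa using betaMeasure_setOf_le_norm hβ le_rfl zero_le_one⟩

/-! ### Masses of belts and corners -/

theorem Plane.norm_sq (x : Plane) : ‖x‖ ^ 2 = x 0 ^ 2 + x 1 ^ 2 := by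
  simp [EuclideanSpace.norm_sq_eq]

theorem Plane.measurePreserving_coordinates :
    MeasurePreserving (fun x : Plane => (x 0, x 1)) :=
  (volume_preserving_finTwoArrow ℝ).comp (PiLp.volume_preserving_ofLp (Fin 2))

theorem rpow_mul_mul_sqrt {h β : ℝ} (hh : 0 ≤ h) (hβ : 0 ≤ β) :
    h ^ β * (h * √h) = h ^ (β + 3 / 2) := by
  rw [Real.rpow_add_of_nonneg hh hβ (by norm_num), show (3 / 2 : ℝ) = 1 + 1 / 2 by norm_num,
    Real.rpow_add_of_nonneg hh zero_le_one (by norm_num), Real.rpow_one, ← Real.sqrt_eq_rpow]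

theorem volume_setOf_sq_mem_Icc_le (a : ℝ) {w : ℝ} (hw : 0 ≤ w) :
    volume {t : ℝ | 1 / 2 ≤ |t| ∧ t ^ 2 ∈ Set.Icc a (a + w)} ≤ ENNReal.ofReal (2 * w) := by
  let right : Set ℝ := {t | 1 / 2 ≤ t ∧ t ^ 2 ∈ Set.Icc a (a + w)}
  have volume_right : volume right ≤ ENNReal.ofReal w := by
    refine (Real.volume_le_diam _).trans (Metric.ediam_le fun s hs t ht => ?_)
    obtain ⟨hs, hs'⟩ := hs
    obtain ⟨ht, ht'⟩ := ht
    rw [edist_dist, Real.dist_eq]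
    refine ENNReal.ofReal_le_ofReal (abs_le.2 ?_)
    constructor <;> nlinarith [hs'.1, hs'.2, ht'.1, ht'.2]
  have cover : {t : ℝ | 1 / 2 ≤ |t| ∧ t ^ 2 ∈ Set.Icc a (a + w)} ⊆ right ∪ Neg.neg ⁻¹' right := by
    rintro t ⟨ht, ht'⟩
    refine (le_abs.1 ht).imp (⟨·, ht'⟩) (⟨·, ?_⟩)
    rwa [neg_sq]
  calc _ ≤ volume right + volume (Neg.neg ⁻¹' right) :=
        (measure_mono cover).trans (measure_union_le _ _)
    _ ≤ ENNReal.ofReal w + ENNReal.ofReal w := by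
        rw [Measure.measure_preimage_neg]
        exact add_le_add volume_right volume_right
    _ = ENNReal.ofReal (2 * w) := by rw [two_mul, ENNReal.ofReal_add hw hw]

/-- The part of the annulus of width `h` along the unit circle within distance `3 √h` of the
horizontal axis; it contains every disk of radius `3 √h` about a point of that axis. -/
def belt (h : ℝ) : Set Plane := {y | 1 - h ≤ ‖y‖ ∧ |y 1| ≤ 3 * √h}

theorem measurableSet_belt (h : ℝ) : MeasurableSet (belt h) := by
  unfold belt
  measurability

theorem volume_belt_inter_closedBall_le {h : ℝ} (hh : 0 ≤ h) (hh' : h ≤ 1 / 64) :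
    volume (belt h ∩ Metric.closedBall 0 1) ≤ ENNReal.ofReal (24 * (h * √h)) := by
  have hsqrt : √h ≤ 1 / 8 := Real.sqrt_le_iff.2 ⟨by norm_num, by linarith⟩
  let fiber (t : ℝ) : Set ℝ :=
    {s | 1 / 2 ≤ |s| ∧ s ^ 2 ∈ Set.Icc ((1 - h) ^ 2 - t ^ 2) ((1 - h) ^ 2 - t ^ 2 + 2 * h)}
  let T : Set (ℝ × ℝ) := {z | z.1 ∈ fiber z.2 ∧ |z.2| ≤ 3 * √h}
  have hT : MeasurableSet T := by
    simp only [T, fiber, Set.mem_ofPred_eq, Set.mem_Icc]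
    measurability
  have belt_subset : belt h ∩ Metric.closedBall 0 1 ⊆ (fun x : Plane => (x 0, x 1)) ⁻¹' T := by
    rintro y ⟨⟨hy, hy₁⟩, hy_ball⟩
    have hnorm := Plane.norm_sq y
    have norm_sq_ge : (1 - h) ^ 2 ≤ ‖y‖ ^ 2 := pow_le_pow_left₀ (by linarith) hy 2
    have norm_sq_le : ‖y‖ ^ 2 ≤ 1 := pow_le_one₀ (norm_nonneg y) (mem_closedBall_zero_iff.1 hy_ball)
    have hy₁_sq : y 1 ^ 2 ≤ (3 / 8) ^ 2 := sq_le_sq' (by linarith [abs_le.1 hy₁])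
      (by linarith [abs_le.1 hy₁])
    refine ⟨⟨?_, ?_, ?_⟩, hy₁⟩
    · exact (sq_le_sq₀ (by norm_num) (abs_nonneg _)).1 (by rw [sq_abs]; nlinarith)
    · simp only; linarith
    · simp only; nlinarith
  calc _ ≤ volume T := by
        rw [← Plane.measurePreserving_coordinates.measure_preimage hT.nullMeasurableSet]
        exact measure_mono belt_subset
    _ ≤ ∫⁻ t, (Set.Icc (-(3 * √h)) (3 * √h)).indicator
          (fun _ => ENNReal.ofReal (2 * (2 * h))) t := by
        rw [Measure.volume_eq_prod, Measure.prod_apply_symm hT]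
        refine lintegral_mono fun t => ?_
        by_cases ht : |t| ≤ 3 * √h
        · rw [Set.indicator_of_mem (Set.mem_Icc.2 (abs_le.1 ht))]
          have preimage_subset : (fun s => (s, t)) ⁻¹' T ⊆ fiber t := fun s hs => hs.1
          exact (measure_mono preimage_subset).trans
            (volume_setOf_sq_mem_Icc_le _ (by positivity))
        · have fiber_eq_empty : (fun s => (s, t)) ⁻¹' T = ∅ :=
            Set.eq_empty_of_forall_notMem fun s hs => ht hs.2
          simp [fiber_eq_empty]
    _ = ENNReal.ofReal (24 * (h * √h)) := by
        rw [lintegral_indicator_const measurableSet_Icc, Real.volume_Icc,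
          ← ENNReal.ofReal_mul (by positivity)]
        ring_nf

/-- A constant for which `belt h` has mass at most `beltConst β * h ^ (β + 3 / 2)`. -/
noncomputable def beltConst (β : ℝ) : ℝ :=
  (β + 1) / Real.pi * 2 ^ β * 24 + 64 ^ (β + 3 / 2)

theorem beltConst_pos {β : ℝ} (hβ : 0 ≤ β) : 0 < beltConst β := by
  unfold beltConst
  positivity

theorem betaMeasure_belt_le {β : ℝ} (hβ : 0 ≤ β) {h : ℝ} (hh : 0 ≤ h) :
    betaMeasure β (belt h) ≤ ENNReal.ofReal (beltConst β * h ^ (β + 3 / 2)) := by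
  rcases le_or_gt h (1 / 64) with hsmall | hlarge
  · have profile_le (y : Plane) (hy : y ∈ belt h) (hy1 : ‖y‖ ≤ 1) :
        betaProfile β ‖y‖ ≤ (β + 1) / Real.pi * (2 * h) ^ β := by
      have hpos : 0 ≤ 1 - ‖y‖ ^ 2 := by nlinarith [norm_nonneg y]
      have hle : 1 - ‖y‖ ^ 2 ≤ 2 * h := by nlinarith [hy.1]
      unfold betaProfile
      gcongr
    calc _ ≤ ENNReal.ofReal ((β + 1) / Real.pi * (2 * h) ^ β) *
          ENNReal.ofReal (24 * (h * √h)) :=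
          (betaMeasure_le_ofReal_mul_volume β (measurableSet_belt h) profile_le).trans
            (mul_le_mul_right (volume_belt_inter_closedBall_le hh hsmall) _)
      _ = ENNReal.ofReal ((β + 1) / Real.pi * 2 ^ β * 24 * h ^ (β + 3 / 2)) := by
          rw [← ENNReal.ofReal_mul (by positivity), Real.mul_rpow (by norm_num) hh,
            ← rpow_mul_mul_sqrt hh hβ]
          ring_nf
      _ ≤ _ := by
          unfold beltConst
          gcongr
          exact le_add_of_nonneg_right (by positivity)
  · have := isProbabilityMeasure_betaMeasure hβ
    refine prob_le_one.trans (ENNReal.one_le_ofReal.2 ?_)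
    calc (1 : ℝ) ≤ (64 * h) ^ (β + 3 / 2) := Real.one_le_rpow (by linarith) (by positivity)
      _ = 64 ^ (β + 3 / 2) * h ^ (β + 3 / 2) := Real.mul_rpow (by norm_num) hh
      _ ≤ _ := by
          unfold beltConst
          gcongr
          exact le_add_of_nonneg_left (by positivity)

/-- The region beyond `1 - h / 32` along the first axis and beyond `√h / 16` along the second
axis of the orthonormal frame `g`. -/
def corner (h : ℝ) (g : Plane ≃ₗᵢ[ℝ] Plane) : Set Plane :=
  {y | 1 - h / 32 < g y 0 ∧ √h / 16 < g y 1}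

theorem measurableSet_corner (h : ℝ) (g : Plane ≃ₗᵢ[ℝ] Plane) : MeasurableSet (corner h g) := by
  have := g.continuous
  unfold corner
  measurability

/-- A constant for which corners have mass at least `cornerConst β * h ^ (β + 3 / 2)`. -/
noncomputable def cornerConst (β : ℝ) : ℝ :=
  (β + 1) / Real.pi * (1 / 128) ^ β / 1024

theorem cornerConst_pos {β : ℝ} (hβ : 0 ≤ β) : 0 < cornerConst β := by
  unfold cornerConst
  positivity

theorem le_betaMeasure_corner {β : ℝ} (hβ : 0 ≤ β) {h : ℝ} (hh : 0 ≤ h) (hh1 : h ≤ 1)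
    (g : Plane ≃ₗᵢ[ℝ] Plane) :
    ENNReal.ofReal (cornerConst β * h ^ (β + 3 / 2)) ≤ betaMeasure β (corner h g) := by
  let R : Set (ℝ × ℝ) := Set.Ioo (1 - h / 32) (1 - h / 64) ×ˢ Set.Ioo (√h / 16) (√h / 8)
  let s : Set Plane := (fun x : Plane => (x 0, x 1)) ⁻¹' R
  have hR : MeasurableSet R := measurableSet_Ioo.prod measurableSet_Ioo
  have volume_s : volume s = ENNReal.ofReal (h / 64 * (√h / 16)) := by
    rw [Plane.measurePreserving_coordinates.measure_preimage hR.nullMeasurableSet,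
      Measure.volume_eq_prod, Measure.prod_prod, Real.volume_Ioo, Real.volume_Ioo,
      ENNReal.ofReal_mul (by positivity)]
    ring_nf
  have one_sub_norm_sq (x : Plane) (hx : x ∈ s) : 1 / 128 * h ≤ 1 - ‖x‖ ^ 2 := by
    obtain ⟨⟨h₀, h₀'⟩, h₁, h₁'⟩ := hx
    have nonneg_zero : 0 ≤ x 0 := (by linarith : 0 ≤ 1 - h / 32).trans h₀.le
    have nonneg_one : 0 ≤ x 1 := (by positivity : 0 ≤ √h / 16).trans h₁.le
    have sq_zero_le : x 0 ^ 2 ≤ (1 - h / 64) ^ 2 := pow_le_pow_left₀ nonneg_zero h₀'.le 2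
    have sq_one_le : x 1 ^ 2 ≤ (√h / 8) ^ 2 := pow_le_pow_left₀ nonneg_one h₁'.le 2
    rw [div_pow, Real.sq_sqrt hh] at sq_one_le
    nlinarith [Plane.norm_sq x]
  calc _ = ENNReal.ofReal ((β + 1) / Real.pi * (1 / 128 * h) ^ β) * volume s := by
        rw [volume_s, ← ENNReal.ofReal_mul (by positivity), Real.mul_rpow (by norm_num) hh,
          ← rpow_mul_mul_sqrt hh hβ, cornerConst]
        ring_nf
    _ ≤ betaMeasure β s := by
        refine ofReal_mul_volume_le_betaMeasure β
          (Plane.measurePreserving_coordinates.measurable hR) (fun x hx => ?_) fun x hx => ?_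
        · have := one_sub_norm_sq x hx
          exact mem_closedBall_zero_iff.2 ((sq_le_one_iff₀ (norm_nonneg x)).1 (by linarith))
        · have := one_sub_norm_sq x hx
          unfold betaProfile
          gcongr
    _ ≤ betaMeasure β (corner h (.refl ℝ Plane)) :=
        measure_mono fun x hx => ⟨hx.1.1, hx.2.1⟩
    _ = betaMeasure β (corner h g) :=
        ((measurePreserving_betaMeasure β g).measure_preimage
          (measurableSet_corner h (.refl ℝ Plane)).nullMeasurableSet).symm

end BetaMeasure

/-! ### Empty caps -/

section Caps

theorem Plane.inner_eq (x y : Plane) : inner ℝ x y = x 0 * y 0 + x 1 * y 1 := by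
  simp [PiLp.inner_apply, mul_comm]

theorem Plane.exists_linearIsometryEquiv_apply_one_eq_zero (x : Plane) :
    ∃ f : Plane ≃ₗᵢ[ℝ] Plane, f x 1 = 0 := by
  have norm_eq : ‖x‖ = ‖(EuclideanSpace.single 0 ‖x‖ : Plane)‖ := by simp
  refine ⟨(ℝ ∙ (x - EuclideanSpace.single 0 ‖x‖))ᗮ.reflection, ?_⟩
  rw [Submodule.reflection_sub norm_eq]
  simp

/-- The isometry of the plane negating the coordinates `i` with `b i = false`. -/
noncomputable def signFlip (b : Fin 2 → Bool) : Plane ≃ₗᵢ[ℝ] Plane :=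
  LinearIsometryEquiv.piLpCongrRight 2 fun i => if b i then .refl ℝ ℝ else .neg ℝ

theorem signFlip_apply (b : Fin 2 → Bool) (x : Plane) (i : Fin 2) :
    signFlip b x i = if b i then x i else -x i := by
  simp only [signFlip, LinearIsometryEquiv.piLpCongrRight_apply]
  split_ifs <;> simp

theorem exists_signFlip_nonneg (u : Plane) : ∃ b, ∀ i, 0 ≤ signFlip b u i := by
  refine ⟨fun i => decide (0 ≤ u i), fun i => ?_⟩
  rw [signFlip_apply]
  split_ifs with h <;> simp only [decide_eq_true_eq] at h <;> linarith

theorem betaMeasure_setOf_norm_sub_le_le {β : ℝ} (hβ : 0 ≤ β) {h : ℝ} (hh : 0 ≤ h)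
    (x : Plane) :
    betaMeasure β {y | 1 - h ≤ ‖y‖ ∧ ‖x - y‖ ≤ 3 * √h} ≤
      ENNReal.ofReal (beltConst β * h ^ (β + 3 / 2)) := by
  obtain ⟨f, hf⟩ := Plane.exists_linearIsometryEquiv_apply_one_eq_zero x
  calc _ ≤ betaMeasure β (f ⁻¹' belt h) := by
        refine measure_mono fun y hy => ⟨by simpa using hy.1, ?_⟩
        calc |f y 1| = ‖f (x - y) 1‖ := by simp [hf]
          _ ≤ ‖f (x - y)‖ := PiLp.norm_apply_le _ _
          _ ≤ 3 * √h := by rw [f.norm_map]; exact hy.2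
    _ = betaMeasure β (belt h) := (measurePreserving_betaMeasure β f).measure_preimage
        (measurableSet_belt h).nullMeasurableSet
    _ ≤ _ := betaMeasure_belt_le hβ hh

theorem lt_mul_add_mul_of_sq_add_sq_eq_one {a c s h p q : ℝ} (ha : 0 ≤ a) (hc : 0 ≤ c)
    (hac : a ^ 2 + c ^ 2 = 1) (hh : 0 ≤ h) (hsa : s ≤ a) (hsh : s ≤ 1 - h) (hp : 1 - h / 32 < p)
    (hq : √h / 16 < q) : s < p * a + q * c := by
  have hsq := Real.sq_sqrt hh
  have a_le : a ≤ 1 := by nlinarith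
  have strict : (1 - h / 32) * a + √h / 16 * c < p * a + q * c := by
    rcases ha.eq_or_lt with rfl | ha
    · have : 0 < c := hc.lt_of_ne fun hc0 => by simp [← hc0] at hac
      nlinarith
    · nlinarith
  refine lt_of_le_of_lt ?_ strict
  rcases le_or_gt (√h / 2) c with hc' | hc'
  · nlinarith [mul_le_mul_of_nonneg_left hc' (Real.sqrt_nonneg h)]
  · have : 1 - h / 4 ≤ a := by nlinarith
    nlinarith [mul_nonneg (Real.sqrt_nonneg h) hc]

theorem lt_inner_of_mem_corner {x u w : Plane} {s h : ℝ} {g : Plane ≃ₗᵢ[ℝ] Plane} (hx : ‖x‖ ≤ 1)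
    (hgx : g x 1 = 0) (hu : ‖u‖ = 1) (hgu : ∀ i, 0 ≤ g u i) (hh : 0 ≤ h)
    (hsx : s ≤ inner ℝ x u) (hsh : s ≤ 1 - h) (hw : w ∈ corner h g) : s < inner ℝ w u := by
  have norm_gu : g u 0 ^ 2 + g u 1 ^ 2 = 1 := by simp [← Plane.norm_sq, hu]
  have gx_le : g x 0 ≤ 1 := by
    calc g x 0 ≤ ‖g x 0‖ := Real.le_norm_self _
      _ ≤ ‖g x‖ := PiLp.norm_apply_le _ _
      _ ≤ 1 := by simpa using hx
  rw [← g.inner_map_map, Plane.inner_eq, hgx, zero_mul, add_zero] at hsx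
  rw [← g.inner_map_map, Plane.inner_eq]
  exact lt_mul_add_mul_of_sq_add_sq_eq_one (hgu 0) (hgu 1) norm_gu hh
    (hsx.trans (mul_le_of_le_one_left (hgu 0) gx_le)) hsh hw.1 hw.2

variable {N N' : ℕ}

/-- The point `x` lies in a closed half-plane, at distance at least `h` from the tangent line of
the unit circle parallel to its boundary, whose interior contains none of the points `V`. -/
def InEmptyCap (h : ℝ) (x : Plane) (V : Fin N → Plane) : Prop :=
  ∃ u s, ‖u‖ = 1 ∧ s ≤ inner ℝ x u ∧ s ≤ 1 - h ∧ ∀ l, inner ℝ (V l) u ≤ s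

/-- The probability that `N` points miss a corner of height `h`, up to constants. The fourth part
of the rate is taken so that a bound by `capWeight β N h ^ 4` can be shared among several heights
`h`. -/
noncomputable def capWeight (β : ℝ) (N : ℕ) (h : ℝ) : ENNReal :=
  ENNReal.ofReal (Real.exp (-(cornerConst β / 4 * N * h ^ (β + 3 / 2))))

theorem measure_pi_compl_corner_le {β : ℝ} (hβ : 0 ≤ β) {h : ℝ} (hh : 0 ≤ h) (hh1 : h ≤ 1)
    (g : Plane ≃ₗᵢ[ℝ] Plane) :
    betaPi β N (Set.pi Set.univ fun _ => (corner h g)ᶜ) ≤ capWeight β N h ^ 4 := by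
  have := isProbabilityMeasure_betaMeasure hβ
  have measure_compl_le : betaMeasure β (corner h g)ᶜ ≤
      ENNReal.ofReal (Real.exp (-(cornerConst β * h ^ (β + 3 / 2)))) := by
    rw [prob_compl_eq_one_sub (measurableSet_corner h g)]
    refine (tsub_le_tsub_left (le_betaMeasure_corner hβ hh hh1 g) _).trans ?_
    have := cornerConst_pos hβ
    rw [← ENNReal.ofReal_one, ← ENNReal.ofReal_sub _ (by positivity)]
    exact ENNReal.ofReal_le_ofReal (Real.one_sub_le_exp_neg _)
  rw [betaPi, Measure.pi_pi, Finset.prod_const, Finset.card_univ, Fintype.card_fin]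
  refine (pow_le_pow_left' measure_compl_le N).trans_eq ?_
  rw [capWeight, ← ENNReal.ofReal_pow (Real.exp_pos _).le, ← ENNReal.ofReal_pow (Real.exp_pos _).le,
    ← Real.exp_nat_mul, ← Real.exp_nat_mul]
  push_cast
  ring_nf

/-- An empty cap contains one of the four corners aligned with `x`. -/
theorem betaPi_setOf_inEmptyCap_le {β : ℝ} (hβ : 0 ≤ β) {h : ℝ} (hh : 0 ≤ h) (hh1 : h ≤ 1)
    {x : Plane} (hx : ‖x‖ ≤ 1) :
    betaPi β N {V | InEmptyCap h x V} ≤ 4 * capWeight β N h ^ 4 := by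
  obtain ⟨f, hf⟩ := Plane.exists_linearIsometryEquiv_apply_one_eq_zero x
  have cover : {V : Fin N → Plane | InEmptyCap h x V} ⊆ ⋃ b : Fin 2 → Bool,
      Set.pi Set.univ fun _ => (corner h (f.trans (signFlip b)))ᶜ := by
    rintro V ⟨u, s, hu, hsx, hsh, hV⟩
    obtain ⟨b, hb⟩ := exists_signFlip_nonneg (f u)
    have hfx : f.trans (signFlip b) x 1 = 0 := by simp [signFlip_apply, hf]
    refine Set.mem_iUnion.2 ⟨b, fun l _ hl => (hV l).not_gt ?_⟩
    exact lt_inner_of_mem_corner hx hfx hu hb hh hsx hsh hl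
  calc _ ≤ ∑ b : Fin 2 → Bool, betaPi β N
        (Set.pi Set.univ fun _ => (corner h (f.trans (signFlip b)))ᶜ) :=
        (measure_mono cover).trans (measure_iUnion_fintype_le _ _)
    _ ≤ ∑ _b : Fin 2 → Bool, capWeight β N h ^ 4 :=
        Finset.sum_le_sum fun b _ => measure_pi_compl_corner_le hβ hh hh1 _
    _ = 4 * capWeight β N h ^ 4 := by simp

theorem capWeight_anti {β : ℝ} (hβ : 0 ≤ β) (hN : N ≤ N') {h h' : ℝ} (hh : 0 ≤ h) (hh' : h ≤ h') :
    capWeight β N' h' ≤ capWeight β N h := by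
  have := cornerConst_pos hβ
  unfold capWeight
  gcongr

theorem capWeight_le_one {β : ℝ} (hβ : 0 ≤ β) {h : ℝ} (hh : 0 ≤ h) : capWeight β N h ≤ 1 := by
  have := cornerConst_pos hβ
  unfold capWeight
  rw [ENNReal.ofReal_le_one, Real.exp_le_one_iff, neg_nonpos]
  positivity

/-- The points `x` and `y` lie in a common closed half-plane, with outer normal on the side `σ` of
the horizontal axis, whose interior contains none of the points `V`. -/
def ShareEmptyCap (σ : ℝ) (x y : Plane) (V : Fin N → Plane) : Prop :=
  ∃ u : Plane, ∃ s, 0 < σ * u 1 ∧ ‖u‖ = 1 ∧ s ≤ inner ℝ x u ∧ s ≤ inner ℝ y u ∧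
    ∀ l, inner ℝ (V l) u ≤ s

/-- A lower bound for the heights of the caps about `x` with normal on the side `σ`. -/
noncomputable def sideHeight (σ : ℝ) (x : Plane) : ℝ :=
  max (1 - ‖x‖) (min 0 (σ * x 1) ^ 2 / 2)

/-- A lower bound for the heights of the caps containing both `x` and `y`. -/
noncomputable def jointHeight (x y : Plane) : ℝ :=
  max (1 - ‖y‖) (‖x - y‖ ^ 2 / 8)

@[fun_prop]
theorem measurable_sideHeight (σ : ℝ) : Measurable (sideHeight σ) := by
  unfold sideHeight
  fun_prop

@[fun_prop]
theorem measurable_jointHeight (x : Plane) : Measurable (jointHeight x) := by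
  unfold jointHeight
  fun_prop

theorem sideHeight_nonneg (σ : ℝ) (x : Plane) : 0 ≤ sideHeight σ x :=
  le_max_of_le_right (by positivity)

theorem jointHeight_nonneg (x y : Plane) : 0 ≤ jointHeight x y :=
  le_max_of_le_right (by positivity)

variable {σ : ℝ} {x y z u : Plane} {s : ℝ}

theorem norm_sub_sq_le_of_le_inner (hx : ‖x‖ ≤ 1) (hu : ‖u‖ = 1) (hs : s ≤ inner ℝ x u) :
    ‖x - u‖ ^ 2 ≤ 2 * (1 - s) := by
  rw [norm_sub_sq_real, hu]
  nlinarith [norm_nonneg x]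

theorem le_norm_of_le_inner (hu : ‖u‖ = 1) (hs : s ≤ inner ℝ x u) : s ≤ ‖x‖ := by
  simpa [hu] using hs.trans (real_inner_le_norm x u)

theorem sideHeight_le_one_sub (hσ : |σ| = 1) (hx : ‖x‖ ≤ 1) (hu : ‖u‖ = 1) (hσu : 0 < σ * u 1)
    (hs : s ≤ inner ℝ x u) : sideHeight σ x ≤ 1 - s := by
  have abs_le_norm : |σ * (x - u) 1| ≤ ‖x - u‖ := by
    rw [abs_mul, hσ, one_mul]
    exact PiLp.norm_apply_le (x - u) 1
  have neg_le_min : -‖x - u‖ ≤ min 0 (σ * x 1) := by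
    refine le_min (neg_nonpos.2 (norm_nonneg _)) ?_
    have := (abs_le.1 abs_le_norm).1
    rw [PiLp.sub_apply, mul_sub] at this
    linarith
  have sq_le : min 0 (σ * x 1) ^ 2 ≤ ‖x - u‖ ^ 2 :=
    sq_le_sq' neg_le_min ((min_le_left _ _).trans (norm_nonneg _))
  exact max_le (by linarith [le_norm_of_le_inner hu hs])
    (by linarith [norm_sub_sq_le_of_le_inner hx hu hs])

theorem jointHeight_le_one_sub (hx : ‖x‖ ≤ 1) (hy : ‖y‖ ≤ 1) (hu : ‖u‖ = 1)
    (hsx : s ≤ inner ℝ x u) (hsy : s ≤ inner ℝ y u) : jointHeight x y ≤ 1 - s := by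
  have triangle : ‖x - y‖ ≤ ‖x - u‖ + ‖y - u‖ := by
    simpa using norm_sub_le (x - u) (y - u)
  have sq_le : ‖x - y‖ ^ 2 ≤ 2 * (‖x - u‖ ^ 2 + ‖y - u‖ ^ 2) :=
    (pow_le_pow_left₀ (norm_nonneg _) triangle 2).trans add_sq_le
  exact max_le (by linarith [le_norm_of_le_inner hu hsy])
    (by linarith [norm_sub_sq_le_of_le_inner hx hu hsx, norm_sub_sq_le_of_le_inner hy hu hsy])

theorem sideHeight_le_one (hσ : |σ| = 1) (hx : ‖x‖ ≤ 1) : sideHeight σ x ≤ 1 := by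
  have abs_le_one : |σ * x 1| ≤ 1 := by
    rw [abs_mul, hσ, one_mul]
    exact (PiLp.norm_apply_le x 1).trans hx
  have sq_le : min 0 (σ * x 1) ^ 2 ≤ 1 := by
    rw [sq_le_one_iff_abs_le_one, abs_of_nonpos (min_le_left _ _), neg_le]
    exact le_min (by norm_num) (abs_le.1 abs_le_one).1
  exact max_le (by linarith [norm_nonneg x]) (by linarith)

theorem jointHeight_le_one (hx : ‖x‖ ≤ 1) (hy : ‖y‖ ≤ 1) : jointHeight x y ≤ 1 := by
  have : ‖x - y‖ ^ 2 ≤ 2 ^ 2 :=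
    pow_le_pow_left₀ (norm_nonneg _) ((norm_sub_le x y).trans (by linarith)) 2
  exact max_le (by linarith [norm_nonneg y]) (by linarith)

theorem ShareEmptyCap.inEmptyCap_sideHeight {V : Fin N → Plane} (h : ShareEmptyCap σ x y V)
    (hσ : |σ| = 1) (hx : ‖x‖ ≤ 1) : InEmptyCap (sideHeight σ x) x V := by
  obtain ⟨u, s, hσu, hu, hsx, -, hV⟩ := h
  exact ⟨u, s, hu, hsx, le_sub_comm.1 (sideHeight_le_one_sub hσ hx hu hσu hsx), hV⟩

theorem ShareEmptyCap.inEmptyCap_jointHeight {V : Fin N → Plane} (h : ShareEmptyCap σ x y V)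
    (hx : ‖x‖ ≤ 1) (hy : ‖y‖ ≤ 1) : InEmptyCap (jointHeight x y) x V := by
  obtain ⟨u, s, -, hu, hsx, hsy, hV⟩ := h
  exact ⟨u, s, hu, hsx, le_sub_comm.1 (jointHeight_le_one_sub hx hy hu hsx hsy), hV⟩

theorem betaPi_setOf_shareEmptyCap_and_le {β : ℝ} (hβ : 0 ≤ β) (hσ : |σ| = 1) (hx : ‖x‖ ≤ 1)
    (hy : ‖y‖ ≤ 1) (hz : ‖z‖ ≤ 1) :
    betaPi β N {V | ShareEmptyCap σ x y V ∧ ShareEmptyCap σ x z V} ≤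
      4 * capWeight β N (sideHeight σ x) ^ 2 * capWeight β N (jointHeight x y) *
        capWeight β N (jointHeight x z) := by
  let h := max (sideHeight σ x) (max (jointHeight x y) (jointHeight x z))
  have subset : {V : Fin N → Plane | ShareEmptyCap σ x y V ∧ ShareEmptyCap σ x z V} ⊆
      {V | InEmptyCap h x V} := by
    rintro V ⟨hVy, hVz⟩
    exact max_rec' (fun h => InEmptyCap h x V) (hVy.inEmptyCap_sideHeight hσ hx)
      (max_rec' (fun h => InEmptyCap h x V) (hVy.inEmptyCap_jointHeight hx hy)
        (hVz.inEmptyCap_jointHeight hx hz))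
  have h_nonneg : 0 ≤ h := le_max_of_le_left (sideHeight_nonneg σ x)
  have h_le_one : h ≤ 1 := max_le (sideHeight_le_one hσ hx)
    (max_le (jointHeight_le_one hx hy) (jointHeight_le_one hx hz))
  calc _ ≤ 4 * capWeight β N h ^ 4 :=
        (measure_mono subset).trans (betaPi_setOf_inEmptyCap_le hβ h_nonneg h_le_one hx)
    _ = 4 * capWeight β N h ^ 2 * capWeight β N h * capWeight β N h := by ring
    _ ≤ _ := by
        gcongr
        · exact capWeight_anti hβ le_rfl (sideHeight_nonneg σ x) (le_max_left _ _)
        · exact capWeight_anti hβ le_rfl (jointHeight_nonneg x y)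
            (le_max_of_le_right (le_max_left _ _))
        · exact capWeight_anti hβ le_rfl (jointHeight_nonneg x z)
            (le_max_of_le_right (le_max_right _ _))

/-! ### Integrals of cap weights -/

@[fun_prop]
theorem measurable_capWeight (β : ℝ) (N : ℕ) : Measurable (capWeight β N) := by
  unfold capWeight
  fun_prop

theorem lintegral_capWeight_le {β : ℝ} (hβ : 0 ≤ β) (hN : 0 < N) {H : Plane → ℝ}
    (hH : Measurable H) (hH_nonneg : ∀ x, 0 ≤ H x) {K η : ℝ} (hη : 0 ≤ η)
    (hK : ∀ h, 0 < h → betaMeasure β {x | H x < h} ≤ ENNReal.ofReal (K * h ^ η)) :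
    ∫⁻ x, capWeight β N (H x) ∂betaMeasure β ≤
      ENNReal.ofReal (K * Real.Gamma (η / (β + 3 / 2) + 1) *
        (cornerConst β / 4 * N) ^ (-(η / (β + 3 / 2)))) := by
  have hc := cornerConst_pos hβ
  have hγ : 0 < β + 3 / 2 := by positivity
  have hθ : 0 ≤ η / (β + 3 / 2) := by positivity
  refine lintegral_exp_neg_mul_le (ψ := fun x => H x ^ (β + 3 / 2)) (by fun_prop)
    (fun x => Real.rpow_nonneg (hH_nonneg x) _) (by linarith) (by positivity) fun a ha => ?_
  refine (measure_mono fun x hx => ?_).trans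
    ((hK _ (Real.rpow_pos_of_pos ha (β + 3 / 2)⁻¹)).trans_eq ?_)
  · exact (Real.lt_rpow_inv_iff_of_pos (hH_nonneg x) ha.le hγ).2 hx
  · rw [← Real.rpow_mul ha.le, inv_mul_eq_div]

/-- A constant for which weights of heights with belt-like sublevel sets have integral at most
`beltRatio β / N`. -/
noncomputable def beltRatio (β : ℝ) : ℝ := 4 * beltConst β / cornerConst β

theorem beltRatio_pos {β : ℝ} (hβ : 0 ≤ β) : 0 < beltRatio β :=
  div_pos (mul_pos four_pos (beltConst_pos hβ)) (cornerConst_pos hβ)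

theorem lintegral_capWeight_le_beltRatio {β : ℝ} (hβ : 0 ≤ β) (hN : 0 < N) {H : Plane → ℝ}
    (hH : Measurable H) (hH_nonneg : ∀ x, 0 ≤ H x)
    (hK : ∀ h, 0 < h → betaMeasure β {x | H x < h} ≤
      ENNReal.ofReal (beltConst β * h ^ (β + 3 / 2))) :
    ∫⁻ x, capWeight β N (H x) ∂betaMeasure β ≤ ENNReal.ofReal (beltRatio β / N) := by
  have hγ : β + 3 / 2 ≠ 0 := by positivity
  have hc := cornerConst_pos hβ
  refine (lintegral_capWeight_le hβ hN hH hH_nonneg (by positivity) hK).trans_eq ?_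
  rw [div_self hγ, Real.Gamma_add_one one_ne_zero, Real.Gamma_one, Real.rpow_neg_one, beltRatio]
  congr 1
  field_simp

theorem lintegral_capWeight_jointHeight_le {β : ℝ} (hβ : 0 ≤ β) (hN : 0 < N) (x : Plane) :
    ∫⁻ y, capWeight β N (jointHeight x y) ∂betaMeasure β ≤ ENNReal.ofReal (beltRatio β / N) := by
  refine lintegral_capWeight_le_beltRatio hβ hN (by fun_prop) (jointHeight_nonneg x) fun h hh =>
    (measure_mono fun y hy => ?_).trans (betaMeasure_setOf_norm_sub_le_le hβ hh.le x)
  simp only [Set.mem_ofPred_eq, jointHeight, max_lt_iff] at hy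
  refine ⟨by linarith [hy.1], abs_le_of_sq_le_sq' ?_ (by positivity) |>.2⟩
  rw [mul_pow, Real.sq_sqrt hh.le]
  linarith [hy.2]

theorem lintegral_capWeight_sideHeight_mul_le {β : ℝ} (hβ : 0 ≤ β) (hN : 0 < N) :
    ∫⁻ x, capWeight β N (sideHeight 1 x) * capWeight β N (sideHeight (-1) x) ∂betaMeasure β ≤
      ENNReal.ofReal (beltRatio β / N) := by
  have mul_le (x : Plane) : capWeight β N (sideHeight 1 x) * capWeight β N (sideHeight (-1) x) ≤
      capWeight β N (max (sideHeight 1 x) (sideHeight (-1) x)) :=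
    max_rec' (fun h => _ ≤ capWeight β N h)
      (mul_le_of_le_one_right' (capWeight_le_one hβ (sideHeight_nonneg _ x)))
      (mul_le_of_le_one_left' (capWeight_le_one hβ (sideHeight_nonneg _ x)))
  refine (lintegral_mono mul_le).trans (lintegral_capWeight_le_beltRatio hβ hN (by fun_prop)
    (fun x => le_max_of_le_left (sideHeight_nonneg 1 x)) fun h hh =>
    (measure_mono fun x hx => ?_).trans (betaMeasure_belt_le hβ hh.le))
  simp only [Set.mem_ofPred_eq, sideHeight, max_lt_iff] at hx
  obtain ⟨⟨hx_norm, hx_pos⟩, -, hx_neg⟩ := hx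
  refine ⟨by linarith, abs_le_of_sq_le_sq ?_ (by positivity)⟩
  rw [mul_pow, Real.sq_sqrt hh.le]
  rcases le_total 0 (x 1) with h0 | h0
  · rw [min_eq_right (by linarith)] at hx_neg
    linarith
  · rw [min_eq_right (by linarith)] at hx_pos
    linarith

theorem betaMeasure_setOf_sideHeight_lt_le {β : ℝ} (hβ : 0 ≤ β) (σ : ℝ) {h : ℝ} (hh : 0 < h) :
    betaMeasure β {x | sideHeight σ x < h} ≤ ENNReal.ofReal (2 ^ (β + 1) * h ^ (β + 1)) := by
  have := isProbabilityMeasure_betaMeasure hβ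
  rw [← Real.mul_rpow zero_le_two hh.le]
  rcases le_or_gt h 1 with hh1 | hh1
  · calc _ ≤ betaMeasure β {x | 1 - h ≤ ‖x‖} := by
          refine measure_mono fun x hx => ?_
          simp only [Set.mem_ofPred_eq, sideHeight, max_lt_iff] at hx ⊢
          linarith [hx.1]
      _ = ENNReal.ofReal ((1 - (1 - h) ^ 2) ^ (β + 1)) :=
          betaMeasure_setOf_le_norm hβ (by linarith) (by linarith)
      _ ≤ _ := by
          have : 0 ≤ 1 - (1 - h) ^ 2 := by nlinarith
          gcongr
          nlinarith
  · exact prob_le_one.trans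
      (ENNReal.one_le_ofReal.2 (Real.one_le_rpow (by linarith) (by positivity)))

theorem exists_lintegral_capWeight_sideHeight_le {β : ℝ} (hβ : 0 ≤ β) :
    ∃ K : ℝ, 0 ≤ K ∧ ∀ σ, ∀ N : ℕ, 0 < N →
      ∫⁻ x, capWeight β N (sideHeight σ x) ∂betaMeasure β ≤ ENNReal.ofReal (K / √N) := by
  have hc := cornerConst_pos hβ
  let θ := (β + 1) / (β + 3 / 2)
  have hθ : 1 / 2 ≤ θ := by
    rw [div_le_div_iff₀ (by norm_num) (by positivity)]
    linarith
  have : 0 < Real.Gamma (θ + 1) := Real.Gamma_pos_of_pos (by positivity)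
  refine ⟨2 ^ (β + 1) * Real.Gamma (θ + 1) * (cornerConst β / 4) ^ (-θ), by positivity,
    fun σ N hN => ?_⟩
  have one_le_N : (1 : ℝ) ≤ N := by exact_mod_cast hN
  refine (lintegral_capWeight_le hβ hN (by fun_prop) (sideHeight_nonneg σ) (by positivity)
    fun h hh => betaMeasure_setOf_sideHeight_lt_le hβ σ hh).trans ?_
  rw [Real.mul_rpow (by positivity) (by positivity), ← mul_assoc, div_eq_mul_inv _ √_,
    Real.sqrt_eq_rpow, ← Real.rpow_neg (by positivity)]
  gcongr

end Caps

/-! ### Upper and lower vertices -/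

section SideVertices

theorem pi_apply_eq_lintegral_insertNth {α : Type*} [MeasurableSpace α] (μ : Measure α)
    [SigmaFinite μ] {n : ℕ} (j : Fin (n + 1)) {A : Set (Fin (n + 1) → α)} (hA : MeasurableSet A) :
    Measure.pi (fun _ => μ) A =
      ∫⁻ y, Measure.pi (fun _ => μ) {S | j.insertNth (α := fun _ => α) y S ∈ A} ∂μ := by
  have hinsert := (measurePreserving_piFinSuccAbove (fun _ => μ) j).symm
  rw [← hinsert.measure_preimage hA.nullMeasurableSet,
    Measure.prod_apply (hinsert.measurable hA)]
  rfl

theorem ae_injective_pi {α : Type*} [MeasurableSpace α] [MeasurableEq α] (μ : Measure α)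
    [SigmaFinite μ] [NullSingletonClass μ] (n : ℕ) :
    ∀ᵐ ω ∂Measure.pi fun _ : Fin n => μ, Function.Injective ω := by
  have ae_ne (j k : Fin n) (hjk : k ≠ j) : ∀ᵐ ω ∂Measure.pi fun _ : Fin n => μ, ω j ≠ ω k := by
    obtain _ | n := n
    · exact j.elim0
    obtain ⟨k, rfl⟩ := Fin.exists_succAbove_eq hjk
    have meas : MeasurableSet {ω : Fin (n + 1) → α | ω j = ω (j.succAbove k)} :=
      measurableSet_eq_fun (by fun_prop) (by fun_prop)
    simp only [ae_iff, ne_eq, not_not]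
    rw [pi_apply_eq_lintegral_insertNth μ j meas]
    simp [eq_comm (b := (_ : Fin n → α) k), Measure.pi_hyperplane]
  filter_upwards [ae_all_iff.2 fun j => ae_all_iff.2 fun k => ae_all_iff.2 (ae_ne j k)]
    with ω hω j k hjk
  by_contra h
  exact hω j k (Ne.symm h) hjk

theorem lintegral_sq_sum_indicator_le {α ι : Type*} [MeasurableSpace α] {ν : Measure α} [Fintype ι]
    {E : ι → Set α} (hE : ∀ j, MeasurableSet (E j)) {q₁ q₂ : ENNReal} (hq₁ : ∀ j, ν (E j) ≤ q₁)
    (hq₂ : ∀ j k, j ≠ k → ν (E j ∩ E k) ≤ q₂) :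
    ∫⁻ V, (∑ j, (E j).indicator 1 V) ^ 2 ∂ν ≤
      Fintype.card ι * q₁ + Fintype.card ι ^ 2 * q₂ := by
  classical
  have sq_eq (V : α) : (∑ j, (E j).indicator 1 V) ^ 2 =
      ∑ j, ∑ k, (E j ∩ E k).indicator (1 : α → ENNReal) V := by
    simp only [sq, Finset.sum_mul_sum, Set.inter_indicator_one, Pi.mul_apply]
  have measurable_inter (j k : ι) : Measurable ((E j ∩ E k).indicator (1 : α → ENNReal)) :=
    measurable_one.indicator ((hE j).inter (hE k))
  have measure_inter_le (j k : ι) : ν (E j ∩ E k) ≤ (if j = k then q₁ else 0) + q₂ := by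
    split_ifs with hjk
    · exact le_add_right ((measure_mono Set.inter_subset_left).trans (hq₁ j))
    · exact le_add_left (hq₂ j k hjk)
  simp only [sq_eq]
  calc _ = ∑ j, ∑ k, ν (E j ∩ E k) := by
        rw [lintegral_finsetSum _ fun j _ =>
          Finset.measurable_fun_sum _ fun k _ => measurable_inter j k]
        simp only [lintegral_finsetSum _ fun k _ => measurable_inter _ k,
          lintegral_indicator_one ((hE _).inter (hE _))]
    _ ≤ ∑ j, ∑ k, ((if j = k then q₁ else 0) + q₂) :=
        Finset.sum_le_sum fun j _ => Finset.sum_le_sum fun k _ => measure_inter_le j k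
    _ = _ := by simp [Finset.sum_add_distrib, sq, mul_assoc]

/-- `ω j` is farthest, among the points `ω`, in some direction on the side `σ` of the horizontal
axis. -/
def IsSideVertex {ι : Type*} (σ : ℝ) (ω : ι → Plane) (j : ι) : Prop :=
  ∃ u ∈ {u : Plane | 0 < σ * u 1}, IsUniqueFarthest ω u j

/-- The number of upper (`σ = 1`) or lower (`σ = -1`) vertices of the convex hull of distinct
points `ω`. -/
noncomputable def sideCount {n : ℕ} (σ : ℝ) (ω : Fin n → Plane) : ℝ :=
  Set.ncard {j | IsSideVertex σ ω j}

theorem isOpen_setOf_isSideVertex {n : ℕ} (σ : ℝ) (j : Fin n) :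
    IsOpen {ω : Fin n → Plane | IsSideVertex σ ω j} := by
  simp only [IsSideVertex, IsUniqueFarthest, Set.ofPred_exists, Set.ofPred_and, Set.ofPred_forall]
  exact isOpen_iUnion fun u => isOpen_const.inter <| isOpen_iInter_of_finite fun k =>
    isOpen_iInter_of_finite fun _ => isOpen_lt (by fun_prop) (by fun_prop)

theorem isOpen_setOf_lt_mul_apply_one (σ : ℝ) : IsOpen {u : Plane | 0 < σ * u 1} :=
  isOpen_lt (by fun_prop) (by fun_prop)

theorem upCount_eq_sideCount {n : ℕ} {ω : Fin n → Plane} (hω : Function.Injective ω) :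
    upCount ω = sideCount 1 ω := by
  rw [sideCount, ← Set.ncard_image_of_injective _ hω]
  simp only [IsSideVertex]
  rw [← setOf_extremePoints_supported_eq_image hω (isOpen_setOf_lt_mul_apply_one 1)]
  simp only [one_mul]
  rfl

theorem lowCount_eq_sideCount {n : ℕ} {ω : Fin n → Plane} (hω : Function.Injective ω) :
    lowCount ω = sideCount (-1) ω := by
  rw [sideCount, ← Set.ncard_image_of_injective _ hω]
  simp only [IsSideVertex]
  rw [← setOf_extremePoints_supported_eq_image hω (isOpen_setOf_lt_mul_apply_one (-1))]
  simp only [neg_mul, one_mul, neg_pos]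
  rfl

variable {n : ℕ} {σ : ℝ} {i : Fin (n + 1)} {x y : Plane} {S : Fin n → Plane} {j : Fin n}

theorem sideCount_eq_sum (σ : ℝ) (ω : Fin n → Plane) :
    sideCount σ ω = ∑ j, {ω | IsSideVertex σ ω j}.indicator (1 : (Fin n → Plane) → ℝ) ω := by
  classical
  rw [sideCount, Set.ncard_eq_toFinset_card', Set.toFinset_ofPred, Finset.card_filter]
  simp [Set.indicator_apply]

@[fun_prop]
theorem measurable_sideCount (σ : ℝ) : Measurable (sideCount σ : (Fin n → Plane) → ℝ) := by
  simp only [funext (sideCount_eq_sum σ)]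
  exact Finset.measurable_fun_sum _ fun j _ =>
    measurable_one.indicator (isOpen_setOf_isSideVertex σ j).measurableSet

theorem memLp_sideCount {β : ℝ} (hβ : 0 ≤ β) (σ : ℝ) (n : ℕ) :
    MemLp (sideCount σ) 2 (betaPi β n) := by
  have := isProbabilityMeasure_betaMeasure hβ
  have : IsProbabilityMeasure (betaPi β n) := by unfold betaPi; infer_instance
  refine MemLp.of_bound (measurable_sideCount σ).aestronglyMeasurable n (.of_forall fun ω => ?_)
  rw [sideCount, Real.norm_natCast, Nat.cast_le]
  simpa using Set.ncard_le_card {j | IsSideVertex σ ω j}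

theorem ShareEmptyCap.comp {N N' : ℕ} {V : Fin N → Plane} (h : ShareEmptyCap σ x y V)
    (g : Fin N' → Fin N) : ShareEmptyCap σ x y (V ∘ g) := by
  obtain ⟨u, s, hσu, hu, hsx, hsy, hV⟩ := h
  exact ⟨u, s, hσu, hu, hsx, hsy, fun l => hV (g l)⟩

theorem shareEmptyCap_of_le_inner {u : Plane} {s : ℝ} (hσu : 0 < σ * u 1) (hsx : s ≤ inner ℝ x u)
    (hsy : s ≤ inner ℝ y u) (hS : ∀ l, inner ℝ (S l) u ≤ s) : ShareEmptyCap σ x y S := by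
  have hu : u ≠ 0 := by
    rintro rfl
    simp at hσu
  have inv_pos : 0 < ‖u‖⁻¹ := inv_pos.2 (norm_pos_iff.2 hu)
  refine ⟨‖u‖⁻¹ • u, ‖u‖⁻¹ * s, ?_, norm_smul_inv_norm (𝕜 := ℝ) hu, ?_, ?_, fun l => ?_⟩
  · rw [PiLp.smul_apply, smul_eq_mul, mul_left_comm]
    exact mul_pos inv_pos hσu
  all_goals
    rw [inner_smul_right, mul_le_mul_iff_of_pos_left inv_pos]
    simp_all

theorem IsSideVertex.shareEmptyCap (h : IsSideVertex σ (i.insertNth x S : Fin (n + 1) → Plane) i) :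
    ShareEmptyCap σ x x S := by
  obtain ⟨u, hσu, hu⟩ := h
  exact shareEmptyCap_of_le_inner hσu le_rfl le_rfl fun l => by
    simpa using (hu (i.succAbove l) (i.succAbove_ne l)).le

theorem IsSideVertex.of_insertNth
    (h : IsSideVertex σ (i.insertNth x S : Fin (n + 1) → Plane) (i.succAbove j)) :
    IsSideVertex σ S j := by
  obtain ⟨u, hσu, hu⟩ := h
  exact ⟨u, hσu, fun k hk => by
    simpa using hu (i.succAbove k) (Fin.succAbove_right_injective.ne hk)⟩

/-- The vertex `S j` on the side `σ` is no longer one when the point `x` is added. -/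
def IsHiddenBy (σ : ℝ) (i : Fin (n + 1)) (x : Plane) (S : Fin n → Plane) (j : Fin n) : Prop :=
  IsSideVertex σ S j ∧ ¬ IsSideVertex σ (i.insertNth x S : Fin (n + 1) → Plane) (i.succAbove j)

theorem IsHiddenBy.shareEmptyCap (h : IsHiddenBy σ i x S j) : ShareEmptyCap σ x (S j) S := by
  obtain ⟨⟨u, hσu, hu⟩, not_isSideVertex⟩ := h
  refine shareEmptyCap_of_le_inner hσu (not_lt.1 fun hlt => not_isSideVertex ⟨u, hσu, ?_⟩) le_rfl
    fun l => ?_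
  · intro k hk
    rcases Fin.eq_self_or_eq_succAbove i k with rfl | ⟨l, rfl⟩
    · simpa using hlt
    · simpa using hu l (ne_of_apply_ne _ hk)
  · rcases eq_or_ne l j with rfl | hl
    · exact le_rfl
    · exact (hu l hl).le

theorem measurable_insertNth (i : Fin (n + 1)) (x : Plane) :
    Measurable fun S : Fin n → Plane => (i.insertNth x S : Fin (n + 1) → Plane) :=
  (MeasurableEquiv.piFinSuccAbove (fun _ => Plane) i).symm.measurable.comp measurable_prodMk_left

theorem measurableSet_setOf_isSideVertex_insertNth (σ : ℝ) (i : Fin (n + 1)) (x : Plane)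
    (j : Fin (n + 1)) :
    MeasurableSet {S : Fin n → Plane | IsSideVertex σ (i.insertNth x S : Fin (n + 1) → Plane) j} :=
  measurable_insertNth i x (isOpen_setOf_isSideVertex σ j).measurableSet

theorem measurableSet_setOf_isHiddenBy (σ : ℝ) (i : Fin (n + 1)) (x : Plane) (j : Fin n) :
    MeasurableSet {S | IsHiddenBy σ i x S j} :=
  (isOpen_setOf_isSideVertex σ j).measurableSet.inter
    (measurableSet_setOf_isSideVertex_insertNth σ i x _).compl

theorem enorm_sideCount_insertNth_sub_le (σ : ℝ) (i : Fin (n + 1)) (x : Plane) (S : Fin n → Plane) :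
    ‖sideCount σ (i.insertNth x S : Fin (n + 1) → Plane) - sideCount σ S‖ₑ ≤
      {S | IsSideVertex σ (i.insertNth x S : Fin (n + 1) → Plane) i}.indicator 1 S +
        ∑ j, {S | IsHiddenBy σ i x S j}.indicator 1 S := by
  rw [sideCount_eq_sum, sideCount_eq_sum, Fin.sum_univ_succAbove _ i, add_sub_assoc,
    ← Finset.sum_sub_distrib]
  refine (enorm_add_le _ _).trans (add_le_add ?_ ((enorm_sum_le _ _).trans
    (Finset.sum_le_sum fun j _ => ?_)))
  · by_cases h : IsSideVertex σ (i.insertNth x S : Fin (n + 1) → Plane) i <;> simp [h]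
  · have of_insertNth := IsSideVertex.of_insertNth (σ := σ) (i := i) (x := x) (S := S) (j := j)
    by_cases h : IsSideVertex σ (i.insertNth x S : Fin (n + 1) → Plane) (i.succAbove j)
    · simp [h, of_insertNth h, IsHiddenBy]
    · by_cases h' : IsSideVertex σ S j <;> simp [h, h', IsHiddenBy]

variable {β : ℝ} {N : ℕ}

theorem betaPi_setOf_isSideVertex_le (hβ : 0 ≤ β) (hσ : |σ| = 1) (hx : ‖x‖ ≤ 1)
    (i : Fin (N + 1)) :
    betaPi β N {S | IsSideVertex σ (i.insertNth x S : Fin (N + 1) → Plane) i} ≤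
      4 * capWeight β N (sideHeight σ x) ^ 2 := by
  have hw := capWeight_le_one (N := N) hβ (jointHeight_nonneg x x)
  calc _ ≤ betaPi β N {S | ShareEmptyCap σ x x S ∧ ShareEmptyCap σ x x S} :=
        measure_mono fun S hS => ⟨hS.shareEmptyCap, hS.shareEmptyCap⟩
    _ ≤ _ := (betaPi_setOf_shareEmptyCap_and_le hβ hσ hx hx hx).trans
        ((mul_le_of_le_one_right' hw).trans (mul_le_of_le_one_right' hw))

theorem betaPi_setOf_isHiddenBy_le (hβ : 0 ≤ β) (hσ : |σ| = 1) (hx : ‖x‖ ≤ 1) (hN : 0 < N)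
    (i : Fin (N + 2)) (j : Fin (N + 1)) :
    betaPi β (N + 1) {S | IsHiddenBy σ i x S j} ≤
      4 * capWeight β N (sideHeight σ x) ^ 2 * ENNReal.ofReal (beltRatio β / N) := by
  have hidden_le {y : Plane} (hy : ‖y‖ ≤ 1) :
      betaPi β N {S | IsHiddenBy σ i x (j.insertNth y S) j} ≤
        4 * capWeight β N (sideHeight σ x) ^ 2 * capWeight β N (jointHeight x y) := by
    refine (measure_mono fun S hS => ?_).trans
      ((betaPi_setOf_shareEmptyCap_and_le hβ hσ hx hy hy).trans
        (mul_le_of_le_one_right' (capWeight_le_one hβ (jointHeight_nonneg x y))))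
    have : ShareEmptyCap σ x y S := by
      simpa [Function.comp_def] using hS.shareEmptyCap.comp j.succAbove
    exact ⟨this, this⟩
  rw [betaPi, pi_apply_eq_lintegral_insertNth _ j (measurableSet_setOf_isHiddenBy σ i x j)]
  refine (lintegral_mono_ae <| (ae_norm_le_one β).mono fun y hy => hidden_le hy).trans ?_
  rw [lintegral_const_mul _ (by fun_prop)]
  gcongr
  exact lintegral_capWeight_jointHeight_le hβ hN x

theorem betaPi_setOf_isHiddenBy_inter_le (hβ : 0 ≤ β) (hσ : |σ| = 1) (hx : ‖x‖ ≤ 1) (hN : 0 < N)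
    (i : Fin (N + 3)) {j k : Fin (N + 2)} (hjk : j ≠ k) :
    betaPi β (N + 2) ({S | IsHiddenBy σ i x S j} ∩ {S | IsHiddenBy σ i x S k}) ≤
      4 * capWeight β N (sideHeight σ x) ^ 2 * ENNReal.ofReal (beltRatio β / N) ^ 2 := by
  obtain ⟨k, rfl⟩ := Fin.exists_succAbove_eq hjk.symm
  let H := {S | IsHiddenBy σ i x S j} ∩ {S | IsHiddenBy σ i x S (j.succAbove k)}
  have measurableSet_H : MeasurableSet H :=
    (measurableSet_setOf_isHiddenBy σ i x _).inter (measurableSet_setOf_isHiddenBy σ i x _)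
  have hidden_le {y z : Plane} (hy : ‖y‖ ≤ 1) (hz : ‖z‖ ≤ 1) :
      betaPi β N {V | (j.insertNth y (k.insertNth z V : Fin (N + 1) → Plane)) ∈ H} ≤
        4 * capWeight β N (sideHeight σ x) ^ 2 * capWeight β N (jointHeight x y) *
          capWeight β N (jointHeight x z) := by
    refine (measure_mono fun V hV => ?_).trans (betaPi_setOf_shareEmptyCap_and_le hβ hσ hx hy hz)
    constructor
    · simpa [Function.comp_def] using hV.1.shareEmptyCap.comp (j.succAbove ∘ k.succAbove)
    · simpa [Function.comp_def] using hV.2.shareEmptyCap.comp (j.succAbove ∘ k.succAbove)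
  have inner_le {y : Plane} (hy : ‖y‖ ≤ 1) :
      betaPi β (N + 1) {S | j.insertNth (α := fun _ => Plane) y S ∈ H} ≤
        4 * capWeight β N (sideHeight σ x) ^ 2 * capWeight β N (jointHeight x y) *
          ENNReal.ofReal (beltRatio β / N) := by
    rw [betaPi, pi_apply_eq_lintegral_insertNth _ k
      (A := {S | j.insertNth (α := fun _ => Plane) y S ∈ H})
      (measurable_insertNth j y measurableSet_H)]
    refine (lintegral_mono_ae <| (ae_norm_le_one β).mono fun z hz => hidden_le hy hz).trans ?_
    rw [lintegral_const_mul _ (by fun_prop)]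
    gcongr
    exact lintegral_capWeight_jointHeight_le hβ hN x
  rw [betaPi, pi_apply_eq_lintegral_insertNth _ j measurableSet_H]
  refine (lintegral_mono_ae <| (ae_norm_le_one β).mono fun y hy => inner_le hy).trans ?_
  rw [lintegral_mul_const _ (by fun_prop), lintegral_const_mul _ (by fun_prop),
    sq (ENNReal.ofReal _), ← mul_assoc]
  gcongr
  exact lintegral_capWeight_jointHeight_le hβ hN x

theorem add_sq_le_four_mul (a b : ENNReal) : (a + b) ^ 2 ≤ 4 * (a ^ 2 + b ^ 2) := by
  calc (a + b) ^ 2 ≤ (max a b + max a b) ^ 2 := by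
        gcongr
        exacts [le_max_left a b, le_max_right a b]
    _ = 4 * max a b ^ 2 := by ring
    _ ≤ 4 * (a ^ 2 + b ^ 2) := by
        gcongr
        exact max_rec' (fun c => c ^ 2 ≤ _) le_self_add le_add_self

theorem natCast_mul_ofReal_div_le {m k : ℕ} (hN : 0 < N) (hm : m ≤ k * N) (b : ℝ) :
    (m : ENNReal) * ENNReal.ofReal (b / N) ≤ k * ENNReal.ofReal b := by
  rw [ENNReal.ofReal_div_of_pos (by exact_mod_cast hN), ENNReal.ofReal_natCast, ← mul_div_assoc]
  refine ENNReal.div_le_of_le_mul ?_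
  rw [mul_right_comm]
  gcongr
  exact_mod_cast hm

/-- The factor in the bound by cap weights for the effect of one point on the vertex counts. -/
noncomputable def influenceConst (β : ℝ) : ENNReal := 4 * (1 + 3 * ENNReal.ofReal (beltRatio β))

theorem lintegral_sq_sum_isHiddenBy_le (hβ : 0 ≤ β) (hσ : |σ| = 1) (hx : ‖x‖ ≤ 1) (hN : 0 < N)
    (i : Fin (N + 3)) :
    ∫⁻ S, (∑ j, {S | IsHiddenBy σ i x S j}.indicator 1 S) ^ 2 ∂betaPi β (N + 2) ≤
      (N + 2 : ℕ) *
          (4 * capWeight β N (sideHeight σ x) ^ 2 * ENNReal.ofReal (beltRatio β / N)) +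
        (N + 2 : ℕ) ^ 2 *
          (4 * capWeight β N (sideHeight σ x) ^ 2 * ENNReal.ofReal (beltRatio β / N) ^ 2) := by
  have measure_hidden_le (j : Fin (N + 2)) : betaPi β (N + 2) {S | IsHiddenBy σ i x S j} ≤
      4 * capWeight β N (sideHeight σ x) ^ 2 * ENNReal.ofReal (beltRatio β / N) := by
    have := beltRatio_pos hβ
    refine (betaPi_setOf_isHiddenBy_le hβ hσ hx (by omega) i j).trans ?_
    gcongr
    · exact capWeight_anti hβ (Nat.le_succ N) (sideHeight_nonneg σ x) le_rfl
    · exact Nat.le_succ N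
  simpa only [Fintype.card_fin] using lintegral_sq_sum_indicator_le
    (fun j => measurableSet_setOf_isHiddenBy σ i x j) measure_hidden_le
    (fun j k hjk => betaPi_setOf_isHiddenBy_inter_le hβ hσ hx hN i hjk)

theorem lintegral_enorm_sideCount_sub_sq_le (hβ : 0 ≤ β) (hσ : |σ| = 1) (hx : ‖x‖ ≤ 1) (hN : 0 < N)
    (i : Fin (N + 3)) :
    ∫⁻ S, ‖sideCount σ (i.insertNth x S : Fin (N + 3) → Plane) - sideCount σ S‖ₑ ^ 2
      ∂betaPi β (N + 2) ≤ (influenceConst β * capWeight β N (sideHeight σ x)) ^ 2 := by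
  set w := capWeight β N (sideHeight σ x)
  set κ := ENNReal.ofReal (beltRatio β / N)
  set T := 3 * ENNReal.ofReal (beltRatio β)
  have hκ : ((N + 2 : ℕ) : ENNReal) * κ ≤ T := natCast_mul_ofReal_div_le (k := 3) hN (by omega) _
  let A := {S : Fin (N + 2) → Plane | IsSideVertex σ (i.insertNth x S : Fin (N + 3) → Plane) i}
  have meas_A : MeasurableSet A := measurableSet_setOf_isSideVertex_insertNth σ i x i
  have measure_A_le : betaPi β (N + 2) A ≤ 4 * w ^ 2 := by
    refine (betaPi_setOf_isSideVertex_le hβ hσ hx i).trans ?_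
    gcongr
    exact capWeight_anti hβ (by omega) (sideHeight_nonneg σ x) le_rfl
  calc _ ≤ ∫⁻ S, 4 * (A.indicator 1 S + (∑ j, {S | IsHiddenBy σ i x S j}.indicator 1 S) ^ 2)
        ∂betaPi β (N + 2) := by
        refine lintegral_mono fun S => ?_
        refine (pow_le_pow_left' (enorm_sideCount_insertNth_sub_le σ i x S) 2).trans
          ((add_sq_le_four_mul _ _).trans_eq ?_)
        by_cases hS : S ∈ A <;> simp [A, hS]
    _ ≤ 4 * (4 * w ^ 2 +
        ((N + 2 : ℕ) * (4 * w ^ 2 * κ) + (N + 2 : ℕ) ^ 2 * (4 * w ^ 2 * κ ^ 2))) := by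
        rw [lintegral_const_mul' _ _ (by simp),
          lintegral_add_left (measurable_one.indicator meas_A), lintegral_indicator_one meas_A]
        gcongr
        exact lintegral_sq_sum_isHiddenBy_le hβ hσ hx hN i
    _ = 16 * w ^ 2 * (1 + (N + 2 : ℕ) * κ + ((N + 2 : ℕ) * κ) ^ 2) := by ring
    _ ≤ 16 * w ^ 2 * (1 + (T + T) + T ^ 2) := by
        gcongr
        exact hκ.trans le_self_add
    _ = (influenceConst β * w) ^ 2 := by
        rw [influenceConst]
        ring

end SideVertices

/-! ### The covariance bound -/

theorem exists_enorm_covariance_sideCount_le {β : ℝ} (hβ : 0 ≤ β) :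
    ∃ c : ENNReal, c ≠ ⊤ ∧ ∀ N : ℕ, 0 < N →
      ‖cov[sideCount 1, sideCount (-1); betaPi β (N + 3)]‖ₑ ≤ c := by
  have := isProbabilityMeasure_betaMeasure hβ
  obtain ⟨K, hK, integral_le⟩ := exists_lintegral_capWeight_sideHeight_le hβ
  let C := influenceConst β
  have C_ne_top : C ≠ ⊤ := by simp [C, influenceConst, ENNReal.mul_eq_top]
  refine ⟨C ^ 2 * (4 * ENNReal.ofReal (beltRatio β) + 4 * ENNReal.ofReal (K ^ 2)),
    by finiteness, fun N hN => ?_⟩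
  have influence_le (σ : ℝ) (hσ : |σ| = 1) (i : Fin (N + 3)) := (ae_norm_le_one β).mono fun x hx =>
    lintegral_enorm_sideCount_sub_sq_le hβ hσ hx hN i
  have integral_mul_integral_le :
      (∫⁻ x, C * capWeight β N (sideHeight 1 x) ∂betaMeasure β) *
        ∫⁻ x, C * capWeight β N (sideHeight (-1) x) ∂betaMeasure β ≤
      C ^ 2 * ENNReal.ofReal (K ^ 2 / N) := by
    rw [lintegral_const_mul _ (by fun_prop), lintegral_const_mul _ (by fun_prop), mul_mul_mul_comm,
      ← sq, ← Real.sq_sqrt N.cast_nonneg, ← div_pow, ENNReal.ofReal_pow (by positivity),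
      sq (ENNReal.ofReal _)]
    gcongr <;> exact integral_le _ N hN
  have integral_mul_le :
      ∫⁻ x, C * capWeight β N (sideHeight 1 x) * (C * capWeight β N (sideHeight (-1) x))
        ∂betaMeasure β ≤ C ^ 2 * ENNReal.ofReal (beltRatio β / N) := by
    simp only [mul_mul_mul_comm C, ← sq]
    rw [lintegral_const_mul _ (by fun_prop)]
    gcongr
    exact lintegral_capWeight_sideHeight_mul_le hβ hN
  calc _ ≤ ∑ _i : Fin (N + 3), (C ^ 2 * ENNReal.ofReal (beltRatio β / N) +
        C ^ 2 * ENNReal.ofReal (K ^ 2 / N)) :=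
        (enorm_covariance_le_sum (memLp_sideCount hβ 1 _) (memLp_sideCount hβ (-1) _)
          (measurable_sideCount 1) (measurable_sideCount (-1)) (fun _ => memLp_sideCount hβ 1 _)
          (fun _ => measurable_sideCount 1) (fun _ => measurable_sideCount (-1))
          (fun _ => by fun_prop) (fun _ => by fun_prop) (influence_le 1 (by simp))
          (influence_le (-1) (by simp))).trans
        (Finset.sum_le_sum fun _ _ => add_le_add integral_mul_le integral_mul_integral_le)
    _ = C ^ 2 * ((N + 3 : ℕ) * ENNReal.ofReal (beltRatio β / N) +
        (N + 3 : ℕ) * ENNReal.ofReal (K ^ 2 / N)) := by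
        rw [Finset.sum_const, Finset.card_univ, Fintype.card_fin, nsmul_eq_mul]
        ring
    _ ≤ _ := by
        refine mul_le_mul' le_rfl (add_le_add ?_ ?_) <;>
          exact natCast_mul_ofReal_div_le (k := 4) hN (by omega) _

theorem integral_upCount_mul_lowCount_sub_eq_covariance {β : ℝ} (hβ : 0 ≤ β) (n : ℕ) :
    (∫ ω, upCount ω * lowCount ω ∂betaPi β n) -
        (∫ ω, upCount ω ∂betaPi β n) * (∫ ω, lowCount ω ∂betaPi β n) =
      cov[sideCount 1, sideCount (-1); betaPi β n] := by
  have := isProbabilityMeasure_betaMeasure hβ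
  have : IsProbabilityMeasure (betaPi β n) := by unfold betaPi; infer_instance
  have : NullSingletonClass (betaMeasure β) :=
    ⟨fun _ => betaMeasure_absolutelyContinuous β (measure_singleton _)⟩
  have ae_injective : ∀ᵐ ω ∂betaPi β n, Function.Injective ω := ae_injective_pi (betaMeasure β) n
  have up : upCount =ᵐ[betaPi β n] sideCount 1 := ae_injective.mono fun _ => upCount_eq_sideCount
  have low : lowCount =ᵐ[betaPi β n] sideCount (-1) :=
    ae_injective.mono fun _ => lowCount_eq_sideCount
  rw [covariance_eq_sub (memLp_sideCount hβ 1 n) (memLp_sideCount hβ (-1) n),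
    integral_congr_ae up, integral_congr_ae low]
  exact congrArg (· - _) (integral_congr_ae (up.mul low))

theorem covariance_upper_lower_bound_general {β : ℝ} (hβ : 0 ≤ β) :
    (fun n : ℕ => (∫ ω, upCount ω * lowCount ω ∂betaPi β n) -
      (∫ ω, upCount ω ∂betaPi β n) * (∫ ω, lowCount ω ∂betaPi β n)) =O[Filter.atTop]
      fun _ => (1 : ℝ) := by
  obtain ⟨c, hc, cov_le⟩ := exists_enorm_covariance_sideCount_le hβ
  refine .of_bound c.toReal (Filter.eventually_atTop.2 ⟨4, fun n hn => ?_⟩)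
  obtain ⟨N, rfl⟩ := Nat.exists_eq_add_of_le' hn
  rw [integral_upCount_mul_lowCount_sub_eq_covariance hβ, norm_one, mul_one, ← toReal_enorm]
  exact ENNReal.toReal_mono hc (cov_le (N + 1) N.succ_pos)

/-- the covariance of the numbers of upper and lower vertices is small.
For `d ≥ 4` and `β = d/2 - 2`, there are `c > 0` and `N` such that for all `n ≥ N`,
`|Cov(Uₙ, Lₙ)| ≤ c·(log n)²`. -/
theorem covariance_upper_lower_bound (d : ℕ) (hd : 4 ≤ d)
    (β : ℝ) (hβ : β = (d : ℝ) / 2 - 2) :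
    ∃ c : ℝ, 0 < c ∧ ∃ N : ℕ, ∀ n : ℕ, N ≤ n →
      |(∫ ω, upCount ω * lowCount ω ∂ betaPi β n) -
          (∫ ω, upCount ω ∂ betaPi β n) * (∫ ω, lowCount ω ∂ betaPi β n)| ≤
        c * Real.log n ^ 2 := by
  have hd : (4 : ℝ) ≤ d := by exact_mod_cast hd
  have one_le_log : ∀ᶠ n : ℕ in Filter.atTop, 1 ≤ Real.log n :=
    (Real.tendsto_log_atTop.comp tendsto_natCast_atTop_atTop).eventually_ge_atTop 1
  obtain ⟨c, hc, cov_le⟩ :=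
    (covariance_upper_lower_bound_general (β := β) (by linarith)).exists_pos
  refine ⟨c, hc, Filter.eventually_atTop.1 ?_⟩
  filter_upwards [cov_le.bound, one_le_log] with n hn hlog
  exact hn.trans (by rw [norm_one]; gcongr; exact one_le_pow₀ hlog)
end
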